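/- arXiv:1511.05323 — 2 statements merged into one kernel-verified Lean document; each statement's English description precedes it below -/
import Mathlib

section
/- Let θ ∈ [−π/2, −π/8), x ∈ ℂ, r > 0, and set y := r e^{iθ} and g(t) := exp( r^{4/3}·f_θ(t) − x y^{2/3} t² ) for t ∈ ℂ (principal powers of y). Then both of the following integrals are absolutely convergent and equal: ∫_{−∞}^{∞} g(s e^{−iθ/3})·e^{−iθ/3} ds = ∫_{−∞}^{∞} g( 4^{−1/3}·e^{iπ/6} + s·e^{−i(π+4θ)/6} )·e^{−i(π+4θ)/6} ds. -/
open Real MeasureTheory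

/-- The phase function `f_θ(t) = e^{4iθ/3}·(i t − t⁴)`. -/
noncomputable def f (θ : ℝ) (t : ℂ) : ℂ :=
  Complex.exp (Complex.I * (4 * (θ : ℂ) / 3)) * (Complex.I * t - t ^ 4)

theorem quartic_bound (A B C : ℂ) (m δ : ℝ) (hm : 0 ≤ m) (hδ : 0 < δ) :
    ∃ M : ℝ, ∀ (T : ℝ) (b w : ℂ), ‖b‖ ≤ m → ‖w‖ = 1 → δ ≤ (C * w ^ 4).re →
      ‖Complex.exp (A * (b + T * w) + B * (b + T * w) ^ 2 - C * (b + T * w) ^ 4)‖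
        ≤ Real.exp (M - T ^ 2) := by
  set N : ℝ := 4 * ((‖A‖ + ‖B‖ + 4 * ‖C‖ * m + 1) * (m + 1) ^ 3) with hN
  have hN0 : 0 ≤ N := by positivity
  refine ⟨N + N * (N / δ) ^ 3, fun T b w hb hw hC => ?_⟩
  rw [Complex.norm_exp, Real.exp_le_exp]
  obtain ⟨τ, hτ⟩ : ∃ τ : ℝ, τ = |T| := ⟨_, rfl⟩
  have hτ0 : 0 ≤ τ := hτ ▸ abs_nonneg T
  have hT2 : T ^ 2 = τ ^ 2 := by rw [hτ, sq_abs]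
  set p : ℂ := (T : ℂ) * w with hp
  have hpn : ‖p‖ = τ := by rw [hp, norm_mul, hw, mul_one, Complex.norm_real, hτ, Real.norm_eq_abs]
  set S : ℝ := (m + 1) * (1 + τ) with hS
  have hS1 : 1 ≤ S := by rw [hS]; nlinarith [mul_nonneg hm hτ0]
  have hSτ : τ ≤ S := by rw [hS]; nlinarith [mul_nonneg hm hτ0]
  have hS0 : 0 ≤ S := by linarith
  have htS : ‖b + p‖ ≤ S := by
    have := norm_add_le b p
    rw [hS]; nlinarith [mul_nonneg hm hτ0]
  have hdec : A * (b + p) + B * (b + p) ^ 2 - C * (b + p) ^ 4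
      = (A * (b + p) + B * (b + p) ^ 2 - C * (b * ((b + p) + p) * ((b + p) ^ 2 + p ^ 2)))
        - ((T ^ 4 : ℝ) : ℂ) * (C * w ^ 4) := by
    rw [hp]; push_cast; ring
  have hE : ‖A * (b + p) + B * (b + p) ^ 2 - C * (b * ((b + p) + p) * ((b + p) ^ 2 + p ^ 2))‖
      ≤ ‖A‖ * S + ‖B‖ * S ^ 2 + ‖C‖ * (m * (S + S) * (S ^ 2 + S ^ 2)) := by
    refine (norm_sub_le _ _).trans (add_le_add ((norm_add_le _ _).trans (add_le_add ?_ ?_)) ?_)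
    · rw [norm_mul]; gcongr
    · rw [norm_mul, norm_pow]; gcongr
    · rw [norm_mul, norm_mul, norm_mul]
      have h1 : ‖b + p + p‖ ≤ S + S := (norm_add_le _ _).trans (by linarith)
      have h2 : ‖(b + p) ^ 2 + p ^ 2‖ ≤ S ^ 2 + S ^ 2 := by
        refine (norm_add_le _ _).trans ?_
        rw [norm_pow, norm_pow, hpn]
        gcongr
      gcongr
  have hS13 : S ≤ S ^ 3 := le_self_pow₀ hS1 (by norm_num)
  have hS23 : S ^ 2 ≤ S ^ 3 := pow_le_pow_right₀ hS1 (by norm_num)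
  have hT3 : τ ^ 2 ≤ S ^ 3 := (pow_le_pow_left₀ hτ0 hSτ 2).trans hS23
  have hA := mul_le_mul_of_nonneg_left hS13 (norm_nonneg A)
  have hB := mul_le_mul_of_nonneg_left hS23 (norm_nonneg B)
  have h3 : (1 + τ) ^ 3 ≤ 4 * (1 + τ ^ 3) := by
    nlinarith [mul_nonneg (by linarith : 0 ≤ 1 + τ) (sq_nonneg (τ - 1))]
  have h4 : ‖A‖ * S + ‖B‖ * S ^ 2 + ‖C‖ * (m * (S + S) * (S ^ 2 + S ^ 2)) + τ ^ 2
      ≤ N * (1 + τ ^ 3) := by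
    calc _ ≤ (‖A‖ + ‖B‖ + 4 * ‖C‖ * m + 1) * S ^ 3 := by linarith
      _ = (‖A‖ + ‖B‖ + 4 * ‖C‖ * m + 1) * (m + 1) ^ 3 * (1 + τ) ^ 3 := by rw [hS]; ring
      _ ≤ (‖A‖ + ‖B‖ + 4 * ‖C‖ * m + 1) * (m + 1) ^ 3 * (4 * (1 + τ ^ 3)) := by gcongr
      _ = _ := by rw [hN]; ring
  have h5 : N * τ ^ 3 ≤ δ * τ ^ 4 + N * (N / δ) ^ 3 := by
    rcases le_total τ (N / δ) with h | h
    · have : N * τ ^ 3 ≤ N * (N / δ) ^ 3 := by gcongr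
      have : 0 ≤ δ * τ ^ 4 := by positivity
      linarith
    · have h' : N ≤ τ * δ := (div_le_iff₀ hδ).1 h
      have : N * τ ^ 3 ≤ τ * δ * τ ^ 3 := by gcongr
      have : 0 ≤ N * (N / δ) ^ 3 := by positivity
      have : τ * δ * τ ^ 3 = δ * τ ^ 4 := by ring
      linarith
  have h6 : δ * τ ^ 4 ≤ T ^ 4 * (C * w ^ 4).re := by
    have : T ^ 4 = τ ^ 4 := by
      rw [show T ^ 4 = (T ^ 2) ^ 2 by ring, hT2]; ring
    rw [this, mul_comm]; gcongr
  rw [hdec, Complex.sub_re, Complex.re_ofReal_mul, hT2]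
  have := (Complex.re_le_norm _).trans hE
  linarith

theorem deform_general (g : ℂ → ℂ) (hg : Differentiable ℂ g) (a : ℂ) (φ β M : ℝ)
    (hb : ∀ (T u : ℝ), u ∈ Set.Icc (0 : ℝ) 1 →
      ‖g (u * a + T * Complex.exp (Complex.I * (φ + u * β)))‖ ≤ Real.exp (M - T ^ 2)) :
    (Integrable fun s : ℝ => g (s * Complex.exp (Complex.I * φ)) * Complex.exp (Complex.I * φ)) ∧
    (Integrable fun s : ℝ => g (a + s * Complex.exp (Complex.I * (φ + β))) *
      Complex.exp (Complex.I * (φ + β))) ∧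
    (∫ s : ℝ, g (s * Complex.exp (Complex.I * φ)) * Complex.exp (Complex.I * φ)) =
      ∫ s : ℝ, g (a + s * Complex.exp (Complex.I * (φ + β))) *
        Complex.exp (Complex.I * (φ + β)) := by
  have hgc := hg.continuous
  have hexp : Integrable (fun T : ℝ => Real.exp (M - T ^ 2)) := by
    have := (integrable_exp_neg_mul_sq (b := 1) one_pos).const_mul (Real.exp M)
    refine this.congr (Filter.Eventually.of_forall fun T => ?_)
    simp only [← Real.exp_add]; congr 1; ring
  have hnorm : ∀ z : ℝ, ‖Complex.exp (Complex.I * z)‖ = 1 := fun z => by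
    rw [mul_comm]; exact Complex.norm_exp_ofReal_mul_I z
  have hi1 : Integrable fun s : ℝ =>
      g (s * Complex.exp (Complex.I * φ)) * Complex.exp (Complex.I * φ) := by
    refine hexp.mono' (by fun_prop) (Filter.Eventually.of_forall fun s => ?_)
    have := hb s 0 (by simp)
    rw [norm_mul, hnorm, mul_one]
    simpa using this
  have hi2 : Integrable fun s : ℝ => g (a + s * Complex.exp (Complex.I * (φ + β))) *
      Complex.exp (Complex.I * (φ + β)) := by
    refine hexp.mono' (by fun_prop) (Filter.Eventually.of_forall fun s => ?_)
    have := hb s 1 (by simp)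
    have h2 := hnorm (φ + β)
    push_cast at h2
    rw [norm_mul, h2, mul_one]
    simpa using this
  refine ⟨hi1, hi2, ?_⟩
  obtain ⟨G, hG⟩ := hg.isExactOn_univ
  replace hG : ∀ z, HasDerivAt G (g z) z := fun z => hG z trivial
  have hline : ∀ (c d : ℂ) (T : ℝ), ∫ s in (-T)..T, g (c + s * d) * d
      = G (c + T * d) - G (c + (-T : ℝ) * d) := by
    intro c d T
    refine intervalIntegral.integral_eq_sub_of_hasDerivAt (f := fun s : ℝ => G (c + s * d))
      (fun s _ => ?_) (Continuous.intervalIntegrable (by fun_prop) _ _)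
    have h1 : HasDerivAt (fun s : ℝ => c + (s : ℂ) * d) d s := by
      simpa using ((Complex.ofRealCLM.hasDerivAt (x := s)).mul_const d).const_add c
    exact (hG _).comp s h1
  have harc : ∀ T : ℝ, ‖G (a + T * Complex.exp (Complex.I * (φ + β)))
      - G (T * Complex.exp (Complex.I * φ))‖ ≤ Real.exp (M - T ^ 2) * (‖a‖ + |T| * |β|) := by
    intro T
    have key := norm_image_sub_le_of_norm_deriv_le_segment_01'
      (f := fun u : ℝ => G (u * a + T * Complex.exp (Complex.I * (φ + u * β))))
      (f' := fun u : ℝ => g (u * a + T * Complex.exp (Complex.I * (φ + u * β))) *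
        (a + T * (Complex.exp (Complex.I * (φ + u * β)) * (Complex.I * β))))
      (C := Real.exp (M - T ^ 2) * (‖a‖ + |T| * |β|)) ?_ ?_
    · simpa using key
    · intro u _
      have h0 : HasDerivAt (fun u : ℝ => (u : ℂ)) 1 u := by
        exact Complex.ofRealCLM.hasDerivAt (x := u)
      have h1 : HasDerivAt (fun u : ℝ => Complex.I * (φ + (u : ℂ) * β)) (Complex.I * β) u := by
        simpa using ((h0.mul_const (β : ℂ)).const_add (φ : ℂ)).const_mul Complex.I
      have h2 : HasDerivAt (fun u : ℝ => (u : ℂ) * a + T * Complex.exp (Complex.I * (φ + u * β)))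
          (a + T * (Complex.exp (Complex.I * (φ + u * β)) * (Complex.I * β))) u := by
        have := (h0.mul_const a).add (h1.cexp.const_mul (T : ℂ))
        rw [one_mul] at this
        exact this
      exact ((hG _).comp u h2).hasDerivWithinAt
    · intro u hu
      rw [norm_mul]
      have h3 := hb T u ⟨hu.1, hu.2.le⟩
      have h4 : ‖a + T * (Complex.exp (Complex.I * (φ + u * β)) * (Complex.I * β))‖
          ≤ ‖a‖ + |T| * |β| := by
        refine (norm_add_le _ _).trans (le_of_eq ?_)
        have h2 := hnorm (φ + u * β)
        push_cast at h2
        rw [norm_mul, norm_mul, h2, norm_mul, Complex.norm_I, Complex.norm_real, Complex.norm_real]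
        simp
      gcongr
  have hlim : Filter.Tendsto (fun T : ℝ => Real.exp (M - T ^ 2) * (‖a‖ + |T| * |β|))
      Filter.atTop (nhds 0) := by
    have h1 : Filter.Tendsto (fun T : ℝ => Real.exp M * ‖a‖ * (T ^ 0 * Real.exp (-T))
        + Real.exp M * |β| * (T ^ 1 * Real.exp (-T))) Filter.atTop (nhds 0) := by
      simpa using ((Real.tendsto_pow_mul_exp_neg_atTop_nhds_zero 0).const_mul
        (Real.exp M * ‖a‖)).add
        ((Real.tendsto_pow_mul_exp_neg_atTop_nhds_zero 1).const_mul (Real.exp M * |β|))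
    refine squeeze_zero' (Filter.Eventually.of_forall fun T => by positivity) ?_ h1
    filter_upwards [Filter.eventually_ge_atTop 1] with T hT
    have h2 : Real.exp (M - T ^ 2) ≤ Real.exp M * Real.exp (-T) := by
      rw [← Real.exp_add, Real.exp_le_exp]; nlinarith
    rw [abs_of_nonneg (by linarith : 0 ≤ T)]
    calc _ ≤ Real.exp M * Real.exp (-T) * (‖a‖ + T * |β|) := by
          have : 0 ≤ T := by linarith
          gcongr
      _ = _ := by ring
  have t1 := intervalIntegral_tendsto_integral hi1 Filter.tendsto_neg_atTop_atBot Filter.tendsto_id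
  have t2 := intervalIntegral_tendsto_integral hi2 Filter.tendsto_neg_atTop_atBot Filter.tendsto_id
  have t3 := t2.sub t1
  have t4 : Filter.Tendsto (fun T : ℝ =>
      (∫ s in (-T)..T, g (a + s * Complex.exp (Complex.I * (φ + β))) *
        Complex.exp (Complex.I * (φ + β))) -
      ∫ s in (-T)..T, g (s * Complex.exp (Complex.I * φ)) * Complex.exp (Complex.I * φ))
      Filter.atTop (nhds 0) := by
    have hlim2 := hlim.add hlim
    rw [add_zero] at hlim2
    refine squeeze_zero_norm (fun T => ?_) hlim2
    have e1 := hline 0 (Complex.exp (Complex.I * φ)) T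
    simp only [zero_add] at e1
    rw [hline, e1]
    have k1 := harc T
    have k2 := harc (-T)
    rw [neg_sq, abs_neg] at k2
    refine le_trans (le_of_eq ?_) ((norm_sub_le _ _).trans (add_le_add k1 k2))
    congr 1; ring
  exact (sub_eq_zero.1 (tendsto_nhds_unique t3 t4)).symm

/-- For `−π/2 ≤ θ < −π/8`, `x ∈ ℂ`, `r > 0`, `y = r e^{iθ}` and
`g(t) = exp(r^{4/3} f_θ(t) − x y^{2/3} t²)`, the integrals of `g` along the
rotated real line `{s e^{−iθ/3}}` and along the steepest-descent line through
`t₁ = 4^{−1/3} e^{iπ/6}` with direction `e^{−i(π+4θ)/6}` are both absolutely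
convergent and equal. -/
theorem pearcey_path_deformation_case1 (θ : ℝ) (hθ : θ ∈ Set.Ico (-(π / 2)) (-(π / 8)))
    (x : ℂ) (r : ℝ) (hr : 0 < r) :
    let y : ℂ := (r : ℂ) * Complex.exp (Complex.I * (θ : ℂ))
    let g : ℂ → ℂ := fun t =>
      Complex.exp ((r : ℂ) ^ ((4 : ℂ) / 3) * f θ t - x * y ^ ((2 : ℂ) / 3) * t ^ 2)
    (Integrable fun s : ℝ =>
        g ((s : ℂ) * Complex.exp (-Complex.I * ((θ : ℂ) / 3))) *
          Complex.exp (-Complex.I * ((θ : ℂ) / 3))) ∧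
    (Integrable fun s : ℝ =>
        g ((4 : ℂ) ^ (-(1 : ℂ) / 3) * Complex.exp (Complex.I * ((π : ℂ) / 6)) +
            (s : ℂ) * Complex.exp (-Complex.I * (((π : ℂ) + 4 * (θ : ℂ)) / 6))) *
          Complex.exp (-Complex.I * (((π : ℂ) + 4 * (θ : ℂ)) / 6))) ∧
    (∫ s : ℝ,
        g ((s : ℂ) * Complex.exp (-Complex.I * ((θ : ℂ) / 3))) *
          Complex.exp (-Complex.I * ((θ : ℂ) / 3))) =
      ∫ s : ℝ,
        g ((4 : ℂ) ^ (-(1 : ℂ) / 3) * Complex.exp (Complex.I * ((π : ℂ) / 6)) +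
            (s : ℂ) * Complex.exp (-Complex.I * (((π : ℂ) + 4 * (θ : ℂ)) / 6))) *
          Complex.exp (-Complex.I * (((π : ℂ) + 4 * (θ : ℂ)) / 6)) := by
  obtain ⟨h1, h2⟩ := hθ
  intro y g
  set K : ℝ := r ^ ((4 : ℝ) / 3) with hK
  have hK0 : 0 < K := Real.rpow_pos_of_pos hr _
  have hKc : (r : ℂ) ^ ((4 : ℂ) / 3) = (K : ℂ) := by
    rw [hK, Complex.ofReal_cpow hr.le]; push_cast; rfl
  set a : ℂ := (4 : ℂ) ^ (-(1 : ℂ) / 3) * Complex.exp (Complex.I * ((π : ℂ) / 6)) with ha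
  set β : ℝ := -π / 6 - θ / 3 with hβ
  have hπ := Real.pi_pos
  have hδ : 0 < Real.cos (4 * β) := by
    apply Real.cos_pos_of_mem_Ioo
    constructor <;> rw [hβ] <;> linarith
  set C : ℂ := (K : ℂ) * Complex.exp (Complex.I * (4 * (θ : ℂ) / 3)) with hC
  obtain ⟨M, hM⟩ := quartic_bound (C * Complex.I) (-(x * y ^ ((2 : ℂ) / 3))) C ‖a‖
    (K * Real.cos (4 * β)) (norm_nonneg a) (by positivity)
  have hgf : ∀ t, g t = Complex.exp (C * Complex.I * t + -(x * y ^ ((2 : ℂ) / 3)) * t ^ 2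
      - C * t ^ 4) := by
    intro t
    simp only [g, f, hKc, hC]
    congr 1; ring
  have hgd : Differentiable ℂ g := by
    rw [funext hgf]; fun_prop
  have main := deform_general g hgd a (-θ / 3) β M ?_
  · have e1 : Complex.exp (-Complex.I * ((θ : ℂ) / 3))
        = Complex.exp (Complex.I * ((-θ / 3 : ℝ) : ℂ)) := by
      congr 1; push_cast; ring
    have e2 : Complex.exp (-Complex.I * (((π : ℂ) + 4 * (θ : ℂ)) / 6))
        = Complex.exp (Complex.I * (((-θ / 3 : ℝ) : ℂ) + (β : ℂ))) := by
      congr 1; rw [hβ]; push_cast; ring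
    rw [e1, e2]
    exact main
  · intro T u hu
    rw [hgf]
    apply hM
    · rw [norm_mul, Complex.norm_real, Real.norm_eq_abs, abs_of_nonneg hu.1]
      exact mul_le_of_le_one_left (norm_nonneg a) hu.2
    · have := Complex.norm_exp_ofReal_mul_I (-θ / 3 + u * β)
      rw [mul_comm] at this
      push_cast at this ⊢
      exact this
    · have : C * Complex.exp (Complex.I * (((-θ / 3 : ℝ) : ℂ) + u * β)) ^ 4
          = (K : ℂ) * Complex.exp (((4 * (u * β) : ℝ) : ℂ) * Complex.I) := by
        rw [hC, ← Complex.exp_nat_mul, mul_assoc, ← Complex.exp_add]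
        congr 2; push_cast; ring
      rw [this, Complex.re_ofReal_mul, Complex.exp_ofReal_mul_I_re]
      have hβ0 : β ≤ 0 := by rw [hβ]; linarith
      have hβ1 : -(π / 8) ≤ β := by rw [hβ]; linarith
      have : Real.cos (4 * β) ≤ Real.cos (4 * (u * β)) := by
        rw [← Real.cos_neg (4 * β), ← Real.cos_neg (4 * (u * β))]
        apply Real.cos_le_cos_of_nonneg_of_le_pi
        · nlinarith [hu.1]
        · linarith
        · nlinarith [hu.2]
      gcongr
end

section
/- Fix x ∈ ℂ, θ ∈ [−π/2, −π/8) and N ∈ ℕ. Then, as r → ∞ along the positive reals, with y := r e^{iθ} and all fractional powers of y principal-branch powers, P(x,y) · (2^{5/6}/√(π/3)) · y^{1/3} · exp( −3·4^{−4/3}·e^{2iπ/3}·y^{4/3} + 4^{−2/3}·x·y^{2/3}·e^{iπ/3} − x²/6 ) − ∑_{n=0}^{N} e^{−i(2n+1)π/6} · A_n(x) · y^{−2n/3} = O( r^{−2(N+1)/3} ). -/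
open Real MeasureTheory Filter Asymptotics

/-- The Pearcey-type integral `P(x,y) = ∫₀^∞ exp(−t⁴ − x t²)·cos(y t) dt`. -/
noncomputable def P (x y : ℂ) : ℂ :=
  ∫ t in Set.Ioi (0 : ℝ), Complex.exp (-(t : ℂ) ^ 4 - x * (t : ℂ) ^ 2) * Complex.cos (y * t)

/-- The coefficients `a_{n,m,k}(x)`. -/
noncomputable def a (x : ℂ) (n m k : ℕ) : ℂ :=
  (-1) ^ m * x ^ k * (2 : ℂ) ^ ((4 * ((2 * m - n - k : ℕ) : ℂ)) / 3) /
    ((k.factorial : ℂ) * ((2 * m - n - k).factorial : ℂ) * ((n - m).factorial : ℂ))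

/-- The coefficients `c_n(x)`. -/
noncomputable def c (x : ℂ) (n : ℕ) : ℂ :=
  ∑ k ∈ Finset.range (n / 2 + 1),
    x ^ (n - 2 * k) *
      ((((3 : ℝ) ^ ((k : ℤ) - (n : ℤ)) * (2 : ℝ) ^ (-(n : ℝ) / 3 - (k : ℝ)) *
          (n.factorial : ℝ) / ((k.factorial : ℝ) * ((n - 2 * k).factorial : ℝ))) : ℝ) : ℂ)

/-- The coefficients `A_n(x)`. -/
noncomputable def A (x : ℂ) (n : ℕ) : ℂ :=
  ∑ m ∈ Finset.Icc ((n + 1) / 2) n, ∑ k ∈ Finset.range (2 * m - n + 1),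
    (-1) ^ (n + k) * a x n m k * c x (2 * m + n - k)


lemma exp_rem (N : ℕ) : ∀ z : ℂ, ‖Complex.exp z - ∑ m ∈ Finset.range N, z ^ m / (m.factorial : ℂ)‖
    ≤ ‖z‖ ^ N * max 1 (Real.exp z.re) := by
  induction N with
  | zero =>
    intro z
    simp [Complex.norm_exp]
  | succ N ih =>
    intro z
    have hd : ∀ s : ℝ, HasDerivAt (fun s : ℝ => Complex.exp ((s : ℂ) * z)
        - ∑ m ∈ Finset.range (N + 1), ((s : ℂ) * z) ^ m / (m.factorial : ℂ))
        (z * (Complex.exp ((s : ℂ) * z)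
        - ∑ m ∈ Finset.range N, ((s : ℂ) * z) ^ m / (m.factorial : ℂ))) s := by
      intro s
      have h1 : HasDerivAt (fun s : ℝ => (s : ℂ) * z) z s := by
        simpa using (Complex.ofRealCLM.hasDerivAt (x := s)).mul_const z
      have h2 := h1.cexp
      have h3 : HasDerivAt (fun s : ℝ => ∑ m ∈ Finset.range (N + 1),
          ((s : ℂ) * z) ^ m / (m.factorial : ℂ))
          (∑ m ∈ Finset.range (N + 1), ((m : ℂ) * ((s : ℂ) * z) ^ (m - 1) * z) /
            (m.factorial : ℂ)) s := by
        apply HasDerivAt.fun_sum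
        intro m _
        exact (h1.fun_pow m).div_const _
      refine (h2.fun_sub h3).congr_deriv ?_
      symm
      rw [Finset.sum_range_succ', mul_sub, Finset.mul_sum]
      simp only [Nat.cast_zero, zero_mul, zero_div, add_zero]
      congr 1
      · ring
      · apply Finset.sum_congr rfl
        intro m _
        rw [Nat.factorial_succ]
        have : (m.factorial : ℂ) ≠ 0 := by exact_mod_cast Nat.factorial_ne_zero m
        have h' : ((m : ℂ) + 1) ≠ 0 := by exact_mod_cast Nat.succ_ne_zero m
        push_cast
        try simp only [Nat.add_sub_cancel]
        field_simp
    have key := norm_image_sub_le_of_norm_deriv_le_segment_01'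
      (C := ‖z‖ ^ (N + 1) * max 1 (Real.exp z.re))
      (fun s _ => (hd s).hasDerivWithinAt) (by
        intro s hs
        rw [norm_mul, pow_succ', mul_assoc]
        gcongr
        refine (ih _).trans ?_
        have e1 : ‖(s : ℂ) * z‖ ≤ ‖z‖ := by
          rw [norm_mul, Complex.norm_real, Real.norm_eq_abs, abs_of_nonneg hs.1]
          nlinarith [norm_nonneg z, hs.2, hs.1]
        have e2 : max 1 (Real.exp ((s : ℂ) * z).re) ≤ max 1 (Real.exp z.re) := by
          apply max_le (le_max_left _ _)
          rw [Complex.re_ofReal_mul]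
          rcases le_total 0 z.re with h | h
          · apply le_max_of_le_right
            apply Real.exp_le_exp.2
            nlinarith [hs.1, hs.2]
          · apply le_max_of_le_left
            apply Real.exp_le_one_iff.2
            exact mul_nonpos_of_nonneg_of_nonpos hs.1 h
        gcongr)
    simpa [Finset.sum_range_succ'] using key

lemma int_pow_gauss (q : ℕ) {b : ℝ} (hb : 0 < b) :
    Integrable (fun u : ℝ => |u| ^ q * Real.exp (-b * u ^ 2)) := by
  have h := (integrable_rpow_mul_exp_neg_mul_sq hb (s := (q : ℝ)) (by
    have : (0 : ℝ) ≤ q := Nat.cast_nonneg q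
    linarith)).norm
  refine h.congr (Eventually.of_forall fun u => ?_)
  simp

lemma integrable_of_bd {g : ℝ → ℂ} (hg : Continuous g) (q : ℕ) {b C : ℝ} (hb : 0 < b)
    (h : ∀ u, ‖g u‖ ≤ C * (|u| ^ q * Real.exp (-b * u ^ 2))) : Integrable g :=
  Integrable.mono' ((int_pow_gauss q hb).const_mul C) hg.aestronglyMeasurable
    (Eventually.of_forall h)

noncomputable def FF (x y z : ℂ) : ℂ := Complex.exp (-z ^ 4 - x * z ^ 2 + Complex.I * y * z)

noncomputable def rot (β : ℝ) : ℂ := Complex.exp (Complex.I * (β : ℂ))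

lemma norm_rot (β : ℝ) : ‖rot β‖ = 1 := by
  unfold rot; rw [mul_comm]; exact Complex.norm_exp_ofReal_mul_I β

lemma rot_pow_re (β : ℝ) (n : ℕ) : (rot β ^ n).re = Real.cos (n * β) := by
  unfold rot
  rw [← Complex.exp_nat_mul]
  have : (n : ℂ) * (Complex.I * (β : ℂ)) = ((n * β : ℝ) : ℂ) * Complex.I := by push_cast; ring
  rw [this, Complex.exp_ofReal_mul_I_re]

lemma FF_bd (x y : ℂ) {c₀ : ℝ} (hc : 0 < c₀) : ∃ C : ℝ, 0 ≤ C ∧ ∀ β : ℝ, c₀ ≤ Real.cos (4 * β) →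
    ∀ u : ℝ, ‖FF x y (rot β * u)‖ ≤ C * Real.exp (-1 * u ^ 2) := by
  refine ⟨Real.exp (‖y‖ + (‖x‖ + ‖y‖ + 1) ^ 2 / (4 * c₀)), (Real.exp_pos _).le, ?_⟩
  intro β hβ u
  unfold FF
  rw [Complex.norm_exp, ← Real.exp_add]
  apply Real.exp_le_exp.2
  have h1 : ((rot β * u) ^ 4).re = Real.cos (4 * β) * u ^ 4 := by
    rw [mul_pow, ← Complex.ofReal_pow, Complex.re_mul_ofReal, rot_pow_re]
    norm_num
  have h2 : -(x * (rot β * u) ^ 2).re ≤ ‖x‖ * u ^ 2 := by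
    have := Complex.abs_re_le_norm (x * (rot β * u) ^ 2)
    simp only [norm_mul, norm_pow, norm_rot, Complex.norm_real, Real.norm_eq_abs, sq_abs,
      one_mul] at this
    linarith [neg_abs_le (x * (rot β * u) ^ 2).re]
  have h3 : (Complex.I * y * (rot β * u)).re ≤ ‖y‖ * |u| := by
    have := Complex.re_le_norm (Complex.I * y * (rot β * u))
    simpa only [norm_mul, norm_rot, Complex.norm_real, Real.norm_eq_abs, Complex.norm_I,
      one_mul] using this
  have h4 : |u| ≤ 1 + u ^ 2 := by
    nlinarith [sq_abs u, sq_nonneg (|u| - 1), abs_nonneg u]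
  have h5 : (‖x‖ + ‖y‖ + 1) * u ^ 2 - c₀ * u ^ 4 ≤ (‖x‖ + ‖y‖ + 1) ^ 2 / (4 * c₀) := by
    rw [le_div_iff₀ (by positivity)]
    nlinarith [sq_nonneg (2 * c₀ * u ^ 2 - (‖x‖ + ‖y‖ + 1))]
  have h6 : c₀ * u ^ 4 ≤ Real.cos (4 * β) * u ^ 4 := by gcongr
  have h7 : ‖y‖ * |u| ≤ ‖y‖ * (1 + u ^ 2) := by gcongr
  simp only [Complex.add_re, Complex.sub_re, Complex.neg_re, h1]
  nlinarith

lemma FF_cont (x y : ℂ) (β : ℝ) : Continuous (fun u : ℝ => FF x y (rot β * u)) := by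
  unfold FF; fun_prop

noncomputable def QQ (x y z : ℂ) : ℂ := 1 - 4 * z ^ 4 - 2 * x * z ^ 2 + Complex.I * y * z

lemma QQ_bd (x y : ℂ) (β u : ℝ) :
    ‖QQ x y (rot β * u)‖ ≤ 1 + 4 * |u| ^ 4 + 2 * ‖x‖ * |u| ^ 2 + ‖y‖ * |u| ^ 1 := by
  unfold QQ
  refine (norm_add_le _ _).trans ?_
  refine (add_le_add_left (norm_sub_le _ _) _).trans ?_
  refine (add_le_add_left (add_le_add_left (norm_sub_le _ _) _) _).trans ?_
  simp [norm_pow, norm_rot, Complex.norm_real, Real.norm_eq_abs]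

lemma pearcey_rot (x y : ℂ) {α : ℝ} (h0 : 0 ≤ α) (h1 : α < π / 8) :
    ∫ t : ℝ, FF x y t = rot α * ∫ u : ℝ, FF x y (rot α * u) := by
  obtain ⟨b, hb1, hb2⟩ := exists_between h1
  have hcos : ∀ β ∈ Set.Ioo (-b) b, Real.cos (4 * b) ≤ Real.cos (4 * β) := by
    intro β hβ
    rw [← Real.cos_abs (4 * β)]
    apply Real.cos_le_cos_of_nonneg_of_le_pi (abs_nonneg _) (by linarith [Real.pi_pos])
    rw [abs_le]; constructor <;> linarith [hβ.1, hβ.2]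
  have hc0 : 0 < Real.cos (4 * b) := Real.cos_pos_of_mem_Ioo ⟨by linarith, by linarith⟩
  obtain ⟨C, hC0, hC⟩ := FF_bd x y hc0
  have hbd : Integrable (fun u : ℝ => (1 + 4 * |u| ^ 4 + 2 * ‖x‖ * |u| ^ 2 + ‖y‖ * |u| ^ 1) *
      (C * Real.exp (-1 * u ^ 2))) := by
    have i0 := (int_pow_gauss 0 one_pos).const_mul C
    have i4 := (int_pow_gauss 4 one_pos).const_mul (4 * C)
    have i2 := (int_pow_gauss 2 one_pos).const_mul (2 * ‖x‖ * C)
    have i1 := (int_pow_gauss 1 one_pos).const_mul (‖y‖ * C)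
    refine (((i0.add i4).add i2).add i1).congr (Eventually.of_forall fun u => ?_)
    simp only [Pi.add_apply]
    ring
  have hint : ∀ β ∈ Set.Ioo (-b) b, Integrable (fun u : ℝ => FF x y (rot β * u)) := by
    intro β hβ
    apply integrable_of_bd (FF_cont x y β) 0 one_pos (C := C)
    intro u
    simpa using hC β (hcos β hβ) u
  have hint1 : ∀ β ∈ Set.Ioo (-b) b, Integrable (fun u : ℝ => (u : ℂ) * FF x y (rot β * u)) := by
    intro β hβ
    apply integrable_of_bd (Complex.continuous_ofReal.mul (FF_cont x y β)) 1 one_pos (C := C)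
    intro u
    change ‖(u : ℂ) * FF x y (rot β * u)‖ ≤ _
    rw [norm_mul, Complex.norm_real, Real.norm_eq_abs]
    calc |u| * ‖FF x y (rot β * u)‖ ≤ |u| * (C * Real.exp (-1 * u ^ 2)) := by
          gcongr; exact hC β (hcos β hβ) u
      _ = _ := by ring
  have hFFz : ∀ z : ℂ, HasDerivAt (FF x y) (FF x y z * (-4 * z ^ 3 - 2 * x * z + Complex.I * y)) z := by
    intro z
    have e1 : HasDerivAt (fun z : ℂ => -z ^ 4 - x * z ^ 2 + Complex.I * y * z)
        (-4 * z ^ 3 - 2 * x * z + Complex.I * y) z := by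
      have := (((hasDerivAt_id z).fun_pow 4).fun_neg.fun_sub
        (((hasDerivAt_id z).fun_pow 2).const_mul x)).fun_add
        ((hasDerivAt_id z).const_mul (Complex.I * y))
      refine this.congr_deriv ?_
      simp; ring
    exact e1.cexp
  have hrot : ∀ β : ℝ, HasDerivAt rot (Complex.I * rot β) β := by
    intro β
    have : HasDerivAt (fun β : ℝ => Complex.I * (β : ℂ)) Complex.I β := by
      simpa using (Complex.ofRealCLM.hasDerivAt (x := β)).const_mul Complex.I
    rw [mul_comm]
    exact this.cexp
  have hu : ∀ β u : ℝ, HasDerivAt (fun u : ℝ => (u : ℂ) * FF x y (rot β * u))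
      (FF x y (rot β * u) * QQ x y (rot β * u)) u := by
    intro β u
    have e0 : HasDerivAt (fun u : ℝ => (u : ℂ)) 1 u := by
      exact (hasDerivAt_id u).ofReal_comp
    have e1 := (hFFz (rot β * u)).comp u (e0.const_mul (rot β))
    have e2 := e0.fun_mul e1
    refine e2.congr_deriv ?_
    simp only [QQ, Function.comp]; ring
  have hβ' : ∀ u β : ℝ, HasDerivAt (fun β : ℝ => rot β * FF x y (rot β * u))
      (Complex.I * rot β * (FF x y (rot β * u) * QQ x y (rot β * u))) β := by
    intro u β
    have e1 := (hFFz (rot β * u)).comp β ((hrot β).mul_const (u : ℂ))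
    have e2 := (hrot β).fun_mul e1
    refine e2.congr_deriv ?_
    simp only [QQ, Function.comp]; ring
  have hnb : ∀ β ∈ Set.Ioo (-b) b, ∀ u : ℝ, ‖FF x y (rot β * u) * QQ x y (rot β * u)‖ ≤
      (1 + 4 * |u| ^ 4 + 2 * ‖x‖ * |u| ^ 2 + ‖y‖ * |u| ^ 1) * (C * Real.exp (-1 * u ^ 2)) := by
    intro β hβ u
    rw [norm_mul, mul_comm]
    gcongr
    · exact QQ_bd x y β u
    · exact hC β (hcos β hβ) u
  have hmeas : ∀ β : ℝ, Continuous (fun u : ℝ => FF x y (rot β * u) * QQ x y (rot β * u)) := by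
    intro β
    apply (FF_cont x y β).mul
    unfold QQ; fun_prop
  have hderiv : ∀ β ∈ Set.Ioo (-b) b,
      HasDerivAt (fun β : ℝ => ∫ u : ℝ, rot β * FF x y (rot β * u)) 0 β := by
    intro β hβ
    have := (hasDerivAt_integral_of_dominated_loc_of_deriv_le (μ := volume)
      (F := fun (β : ℝ) (u : ℝ) => rot β * FF x y (rot β * u))
      (F' := fun (β : ℝ) (u : ℝ) => Complex.I * rot β * (FF x y (rot β * u) * QQ x y (rot β * u)))
      (s := Set.Ioo (-b) b) (x₀ := β) (bound := fun u : ℝ =>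
        (1 + 4 * |u| ^ 4 + 2 * ‖x‖ * |u| ^ 2 + ‖y‖ * |u| ^ 1) * (C * Real.exp (-1 * u ^ 2)))
      (Ioo_mem_nhds hβ.1 hβ.2)
      (Eventually.of_forall fun β => (continuous_const.mul (FF_cont x y β)).aestronglyMeasurable)
      ((hint β hβ).const_mul _)
      (continuous_const.mul (hmeas β)).aestronglyMeasurable
      (Eventually.of_forall fun u β hβ => by
        rw [norm_mul, norm_mul, norm_rot, Complex.norm_I, one_mul, one_mul]
        exact hnb β hβ u)
      hbd
      (Eventually.of_forall fun u β _ => hβ' u β)).2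
    have hz : ∫ u : ℝ, Complex.I * rot β * (FF x y (rot β * u) * QQ x y (rot β * u)) = 0 := by
      rw [integral_const_mul, integral_eq_zero_of_hasDerivAt_of_integrable (hu β) _ (hint1 β hβ),
        mul_zero]
      exact Integrable.mono' hbd (hmeas β).aestronglyMeasurable
        (Eventually.of_forall (hnb β hβ))
    rw [hz] at this
    exact this
  have hconst := constant_of_has_deriv_right_zero
    (f := fun β : ℝ => ∫ u : ℝ, rot β * FF x y (rot β * u)) (a := 0) (b := α)
    (fun β hβ => (hderiv β ⟨by linarith [hβ.1], by linarith [hβ.2]⟩).continuousAt.continuousWithinAt)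
    (fun β hβ => (hderiv β ⟨by linarith [hβ.1], by linarith [hβ.2]⟩).hasDerivWithinAt)
    α ⟨h0, le_rfl⟩
  rw [← integral_const_mul]
  refine Eq.trans ?_ hconst.symm
  simp [rot]

noncomputable def ee (q k : ℕ) : ℂ :=
  if 2 * k ≤ q then (q.factorial : ℂ) / ((k.factorial : ℂ) * ((q - 2 * k).factorial : ℂ)) else 0

lemma fac_ne (n : ℕ) : (n.factorial : ℂ) ≠ 0 := by exact_mod_cast Nat.factorial_ne_zero n

lemma ee_rec (q k : ℕ) : ee (q + 2) (k + 1) = ee (q + 1) (k + 1) + 2 * ((q : ℂ) + 1) * ee q k := by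
  unfold ee
  by_cases h1 : 2 * k ≤ q
  · obtain ⟨d, rfl⟩ := Nat.exists_eq_add_of_le h1
    rw [if_pos (by omega), if_pos h1]
    rcases d with _ | d
    · rw [if_neg (by omega)]
      simp only [add_zero, Nat.sub_self, Nat.factorial_zero,
        show 2 * k + 2 - 2 * (k + 1) = 0 by omega]
      rw [Nat.factorial_succ, Nat.factorial_succ (2 * k), Nat.factorial_succ k]
      have := fac_ne k
      have h' : ((k : ℂ) + 1) ≠ 0 := by exact_mod_cast Nat.succ_ne_zero k
      push_cast
      field_simp
      ring
    · rw [if_pos (by omega)]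
      rw [show 2 * k + (d + 1) + 2 - 2 * (k + 1) = d + 1 by omega,
        show 2 * k + (d + 1) + 1 - 2 * (k + 1) = d by omega,
        show 2 * k + (d + 1) - 2 * k = d + 1 by omega]
      rw [Nat.factorial_succ (2 * k + (d + 1) + 1), Nat.factorial_succ (2 * k + (d + 1)),
        Nat.factorial_succ k, Nat.factorial_succ d]
      have := fac_ne k
      have := fac_ne d
      have h' : ((k : ℂ) + 1) ≠ 0 := by exact_mod_cast Nat.succ_ne_zero k
      have h'' : ((d : ℂ) + 1) ≠ 0 := by exact_mod_cast Nat.succ_ne_zero d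
      push_cast
      field_simp
      ring
  · rw [if_neg (by omega), if_neg (by omega), if_neg h1]; simp

noncomputable def hh (x : ℂ) (q : ℕ) : ℂ :=
  ∑ k ∈ Finset.range (q / 2 + 1), ee q k * (-x / 6) ^ (q - 2 * k) * (1 / 24) ^ k

lemma hh_eq (x : ℂ) (q K : ℕ) (hK : q / 2 + 1 ≤ K) :
    hh x q = ∑ k ∈ Finset.range K, ee q k * (-x / 6) ^ (q - 2 * k) * (1 / 24) ^ k := by
  unfold hh
  apply Finset.sum_subset
  · intro k hk; simp only [Finset.mem_range] at *; omega
  · intro k _ hk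
    simp only [Finset.mem_range, not_lt] at hk
    rw [ee, if_neg (by omega)]; simp

lemma hh_rec (x : ℂ) (q : ℕ) :
    hh x (q + 2) = (-x / 6) * hh x (q + 1) + (1 / 12) * ((q : ℂ) + 1) * hh x q := by
  rw [hh_eq x (q + 2) (q + 3) (by omega), hh_eq x (q + 1) (q + 3) (by omega),
    hh_eq x q (q + 2) (by omega), Finset.sum_range_succ' _ (q + 2),
    Finset.sum_range_succ' (fun k => ee (q + 1) k * (-x / 6) ^ (q + 1 - 2 * k) * (1 / 24) ^ k) (q + 2),
    mul_add, Finset.mul_sum, Finset.mul_sum, add_right_comm, ← Finset.sum_add_distrib]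
  congr 1
  · apply Finset.sum_congr rfl
    intro k _
    rw [ee_rec, show q + 2 - 2 * (k + 1) = q - 2 * k by omega]
    by_cases h : 2 * (k + 1) ≤ q + 1
    · rw [show q - 2 * k = (q + 1 - 2 * (k + 1)) + 1 by omega]
      ring
    · have : ee (q + 1) (k + 1) = 0 := by rw [ee, if_neg h]
      rw [this]; ring
  · have h1 := fac_ne (q + 1)
    have h2 := fac_ne (q + 2)
    simp [ee, h1, h2]
    ring

lemma two_pow_third : ((2 : ℂ) ^ ((1 : ℂ) / 3)) ^ 3 = 2 := by
  rw [← Complex.cpow_nat_mul]; norm_num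

noncomputable def tt : ℂ := (2 : ℂ) ^ ((1 : ℂ) / 3)

lemma tt_cube : tt ^ 3 = 2 := two_pow_third

lemma tt_ne : tt ≠ 0 := by
  intro h; have := tt_cube; rw [h] at this; norm_num at this

lemma hh_c (x : ℂ) (q : ℕ) : tt ^ (2 * q) * hh x q = (-1) ^ q * c x q := by
  unfold hh c
  rw [Finset.mul_sum, Finset.mul_sum]
  apply Finset.sum_congr rfl
  intro k hk
  have hk' : 2 * k ≤ q := by simp only [Finset.mem_range] at hk; omega
  rw [ee, if_pos hk']
  obtain ⟨d, rfl⟩ := Nat.exists_eq_add_of_le hk'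
  rw [show 2 * k + d - 2 * k = d by omega]
  have h3 : (3 : ℝ) ^ ((k : ℤ) - ((2 * k + d : ℕ) : ℤ)) = ((3 : ℝ) ^ (k + d))⁻¹ := by
    rw [show (k : ℤ) - ((2 * k + d : ℕ) : ℤ) = -((k + d : ℕ) : ℤ) by push_cast; ring,
      zpow_neg, zpow_natCast]
  have h2 : (((2 : ℝ) ^ (-((2 * k + d : ℕ) : ℝ) / 3 - (k : ℝ)) : ℝ) : ℂ)
      = (tt ^ (5 * k + d))⁻¹ := by
    rw [Complex.ofReal_cpow (by norm_num), tt, ← Complex.cpow_nat_mul, ← Complex.cpow_neg]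
    congr 1
    push_cast
    ring
  rw [h3]
  simp only [Complex.ofReal_div, Complex.ofReal_mul]
  rw [h2]
  push_cast
  have a1 := fac_ne k
  have a2 := fac_ne d
  have a3 := tt_ne
  have h6 : (6 : ℂ) ^ d = 3 ^ d * tt ^ (3 * d) := by
    rw [pow_mul, tt_cube, ← mul_pow]; norm_num
  have h24 : (24 : ℂ) ^ k = 3 ^ k * tt ^ (9 * k) := by
    rw [show 9 * k = 3 * (3 * k) by ring, pow_mul, tt_cube, pow_mul, ← mul_pow]; norm_num
  have hs : (-1 : ℂ) ^ (2 * k + d) = (-1) ^ d := by rw [pow_add, pow_mul]; simp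
  rw [hs, div_pow, div_pow, neg_pow x, h6, h24]
  field_simp
  ring

lemma gauss_bd {ζ : ℂ} (x : ℂ) (h1 : ‖ζ‖ = 1) (h2 : 0 < (ζ ^ 2).re) (σ : ℝ) :
    ‖Complex.exp (-6 * (ζ * σ) ^ 2 - 2 * x * (ζ * σ))‖ ≤
      Real.exp (‖x‖ ^ 2 / (5 * (ζ ^ 2).re)) * Real.exp (-(ζ ^ 2).re * σ ^ 2) := by
  rw [Complex.norm_exp, ← Real.exp_add]
  apply Real.exp_le_exp.2
  have e1 : (-6 * (ζ * σ) ^ 2).re = -6 * (ζ ^ 2).re * σ ^ 2 := by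
    rw [show -6 * (ζ * (σ : ℂ)) ^ 2 = ((-6 : ℝ) : ℂ) * (ζ ^ 2 * ((σ ^ 2 : ℝ) : ℂ)) by
      push_cast; ring, Complex.re_ofReal_mul, Complex.re_mul_ofReal]; ring
  have e2 : -(2 * x * (ζ * σ)).re ≤ 2 * ‖x‖ * |σ| := by
    have := Complex.abs_re_le_norm (2 * x * (ζ * σ))
    simp only [norm_mul, h1, Complex.norm_real, Real.norm_eq_abs, one_mul,
      Complex.norm_ofNat] at this
    linarith [neg_abs_le (2 * x * (ζ * σ)).re]
  rw [Complex.sub_re, e1]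
  have e3 : 2 * ‖x‖ * |σ| - 5 * (ζ ^ 2).re * σ ^ 2 ≤ ‖x‖ ^ 2 / (5 * (ζ ^ 2).re) := by
    rw [le_div_iff₀ (by positivity)]
    rw [← sq_abs σ]
    linear_combination sq_nonneg (5 * (ζ ^ 2).re * |σ| - ‖x‖)
  linarith

noncomputable def gi (ζ x : ℂ) (q : ℕ) (σ : ℝ) : ℂ :=
  (ζ * σ) ^ q * Complex.exp (-6 * (ζ * σ) ^ 2 - 2 * x * (ζ * σ))

lemma gi_int {ζ : ℂ} (x : ℂ) (h1 : ‖ζ‖ = 1) (h2 : 0 < (ζ ^ 2).re) (q : ℕ) :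
    Integrable (gi ζ x q) := by
  apply integrable_of_bd (g := gi ζ x q) (by unfold gi; fun_prop) q h2
    (C := Real.exp (‖x‖ ^ 2 / (5 * (ζ ^ 2).re)))
  intro σ
  unfold gi
  rw [norm_mul, norm_pow, norm_mul, h1, one_mul, Complex.norm_real, Real.norm_eq_abs]
  have := mul_le_mul_of_nonneg_left (gauss_bd x h1 h2 σ) (pow_nonneg (abs_nonneg σ) q)
  linarith

lemma gi_deriv (ζ x : ℂ) (q : ℕ) (σ : ℝ) : HasDerivAt (gi ζ x (q + 1))
    (ζ * (((q : ℂ) + 1) * gi ζ x q σ - 12 * gi ζ x (q + 2) σ - 2 * x * gi ζ x (q + 1) σ)) σ := by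
  have e0 : HasDerivAt (fun u : ℝ => (u : ℂ)) 1 σ := (hasDerivAt_id σ).ofReal_comp
  have e1 := e0.const_mul ζ
  have e2 := e1.fun_pow (q + 1)
  have e3 := (((e1.fun_pow 2).const_mul (-6)).fun_sub (e1.const_mul (2 * x))).cexp
  refine (e2.fun_mul e3).congr_deriv ?_
  simp only [gi]
  push_cast
  try simp only [Nat.add_sub_cancel]
  ring

lemma gi_deriv0 (ζ x : ℂ) (σ : ℝ) : HasDerivAt (gi ζ x 0)
    (ζ * (- 12 * gi ζ x 1 σ - 2 * x * gi ζ x 0 σ)) σ := by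
  have e0 : HasDerivAt (fun u : ℝ => (u : ℂ)) 1 σ := (hasDerivAt_id σ).ofReal_comp
  have e1 := e0.const_mul ζ
  have e2 := e1.fun_pow 0
  have e3 := (((e1.fun_pow 2).const_mul (-6)).fun_sub (e1.const_mul (2 * x))).cexp
  refine (e2.fun_mul e3).congr_deriv ?_
  simp only [gi]
  push_cast
  ring

lemma mom_rec {ζ : ℂ} (x : ℂ) (h1 : ‖ζ‖ = 1) (h2 : 0 < (ζ ^ 2).re) (q : ℕ) :
    ∫ σ, gi ζ x (q + 2) σ = (-x / 6) * (∫ σ, gi ζ x (q + 1) σ) +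
      (1 / 12) * ((q : ℂ) + 1) * ∫ σ, gi ζ x q σ := by
  have hζ : ζ ≠ 0 := by intro h; simp [h] at h1
  have hi := fun q => gi_int x h1 h2 q
  have hI : Integrable (fun σ => ((q : ℂ) + 1) * gi ζ x q σ - 12 * gi ζ x (q + 2) σ) :=
    ((hi q).const_mul _).sub ((hi _).const_mul _)
  have := integral_eq_zero_of_hasDerivAt_of_integrable (gi_deriv ζ x q)
    ((hI.sub ((hi _).const_mul _)).const_mul _) (hi _)
  rw [integral_const_mul, integral_sub hI ((hi _).const_mul _),
    integral_sub ((hi q).const_mul _) ((hi _).const_mul _), integral_const_mul,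
    integral_const_mul, integral_const_mul] at this
  have := (mul_eq_zero.1 this).resolve_left hζ
  linear_combination (-1 / 12) * this

lemma mom_one {ζ : ℂ} (x : ℂ) (h1 : ‖ζ‖ = 1) (h2 : 0 < (ζ ^ 2).re) :
    ∫ σ, gi ζ x 1 σ = (-x / 6) * (∫ σ, gi ζ x 0 σ) := by
  have hζ : ζ ≠ 0 := by intro h; simp [h] at h1
  have hi := fun q => gi_int x h1 h2 q
  have := integral_eq_zero_of_hasDerivAt_of_integrable (gi_deriv0 ζ x)
    ((((hi 1).const_mul _).sub ((hi _).const_mul _)).const_mul _) (hi _)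
  rw [integral_const_mul, integral_sub ((hi _).const_mul _) ((hi _).const_mul _),
    integral_const_mul, integral_const_mul] at this
  have := (mul_eq_zero.1 this).resolve_left hζ
  linear_combination (-1 / 12) * this

lemma mom_zero {ζ : ℂ} (x : ℂ) (h1 : ‖ζ‖ = 1) (h2 : 0 < (ζ ^ 2).re) (h3 : 0 < ζ.re) :
    ζ * ∫ σ, gi ζ x 0 σ = (Real.sqrt (π / 6) : ℂ) * Complex.exp (x ^ 2 / 6) := by
  have hζ : ζ ≠ 0 := by intro h; simp [h] at h1
  have h := integral_cexp_quadratic (b := -6 * ζ ^ 2) (by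
    rw [show -6 * ζ ^ 2 = ((-6 : ℝ) : ℂ) * ζ ^ 2 by push_cast; ring, Complex.re_ofReal_mul]
    linarith) (-2 * x * ζ) 0
  have hc : ∫ σ, gi ζ x 0 σ = ∫ σ : ℝ, Complex.exp (-6 * ζ ^ 2 * (σ : ℂ) ^ 2 + -2 * x * ζ * σ + 0) := by
    congr 1; ext σ; unfold gi; rw [pow_zero, one_mul]; congr 1; ring
  rw [hc, h]
  have e1 : (0 : ℂ) - (-2 * x * ζ) ^ 2 / (4 * (-6 * ζ ^ 2)) = x ^ 2 / 6 := by
    field_simp; ring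
  have e2 : (π : ℂ) / -(-6 * ζ ^ 2) = ((Real.sqrt (π / 6) : ℂ) / ζ) ^ 2 := by
    rw [div_pow, ← Complex.ofReal_pow, Real.sq_sqrt (by positivity)]
    push_cast; field_simp
  have e3 : (((Real.sqrt (π / 6) : ℂ) / ζ) ^ 2) ^ ((1 : ℂ) / 2) = (Real.sqrt (π / 6) : ℂ) / ζ := by
    have : ((1 : ℂ) / 2) = ((2 : ℕ) : ℂ)⁻¹ := by norm_num
    rw [this]
    have hre : 0 < ((Real.sqrt (π / 6) : ℂ) / ζ).re := by
      rw [div_eq_mul_inv, Complex.re_ofReal_mul, Complex.inv_re]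
      have := Complex.normSq_pos.2 hζ
      positivity
    have harg := Complex.abs_arg_lt_pi_div_two_iff.2 (Or.inl hre)
    rw [abs_lt] at harg
    apply Complex.pow_cpow_nat_inv two_ne_zero
    · push_cast; linarith [harg.1]
    · push_cast; linarith [harg.2]
  rw [e1, e2, e3]
  field_simp

lemma mom_eq {ζ : ℂ} (x : ℂ) (h1 : ‖ζ‖ = 1) (h2 : 0 < (ζ ^ 2).re) (h3 : 0 < ζ.re) (q : ℕ) :
    ζ * ∫ σ, gi ζ x q σ = (Real.sqrt (π / 6) : ℂ) * Complex.exp (x ^ 2 / 6) * hh x q := by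
  induction q using Nat.strong_induction_on with
  | _ q ih =>
    match q with
    | 0 => rw [mom_zero x h1 h2 h3]; simp [hh, ee]
    | 1 =>
      rw [mom_one x h1 h2, mul_left_comm, mom_zero x h1 h2 h3]; simp [hh, ee]; ring
    | q + 2 =>
      rw [mom_rec x h1 h2, hh_rec]
      linear_combination (-x / 6) * ih (q + 1) (by omega) + (1 / 12) * ((q : ℂ) + 1) * ih q (by omega)

noncomputable def bb (x : ℂ) (m j : ℕ) : ℂ :=
  ∑ k ∈ Finset.range (m - j + 1), (-1) ^ m * x ^ k * 4 ^ (m - j - k) /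
    ((k.factorial : ℂ) * ((m - j - k).factorial : ℂ) * (j.factorial : ℂ)) * hh x (3 * m + j - k)

noncomputable def BB (x : ℂ) (n : ℕ) : ℂ :=
  ∑ m ∈ Finset.Icc ((n + 1) / 2) n, bb x m (n - m)

lemma A_eq (x : ℂ) (n : ℕ) : A x n = tt ^ (4 * n) * BB x n := by
  unfold A BB bb a
  rw [Finset.mul_sum]
  apply Finset.sum_congr rfl
  intro m hm
  rw [Finset.mem_Icc] at hm
  have hmn : m - (n - m) = 2 * m - n := by omega
  rw [Finset.mul_sum, hmn]
  apply Finset.sum_congr rfl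
  intro k hk
  rw [Finset.mem_range] at hk
  have hq : 3 * m + (n - m) - k = 2 * m + n - k := by omega
  rw [hq]
  obtain ⟨l, hl⟩ : ∃ l, 2 * m - n - k = l := ⟨_, rfl⟩
  obtain ⟨q, hq'⟩ : ∃ q, 2 * m + n - k = q := ⟨_, rfl⟩
  rw [hl, hq']
  have hs : (-1 : ℂ) ^ (n + k) = (-1) ^ q := by
    have : q + 2 * k = (n + k) + 2 * m := by omega
    have h := congrArg (fun i => (-1 : ℂ) ^ i) this
    simpa [pow_add, pow_mul] using h.symm
  have h2 : (2 : ℂ) ^ ((4 * (l : ℂ)) / 3) = tt ^ (4 * l) := by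
    rw [tt, ← Complex.cpow_nat_mul]; congr 1; push_cast; ring
  have h4 : (4 : ℂ) ^ l = tt ^ (6 * l) := by
    rw [show 6 * l = 3 * (2 * l) by ring, pow_mul, tt_cube, pow_mul]; norm_num
  have he : 4 * n + 6 * l = 4 * l + 2 * q := by omega
  have hc := hh_c x q
  rw [h2, h4, hs]
  calc _ = (-1) ^ m * x ^ k * tt ^ (4 * l) /
    ((k.factorial : ℂ) * (l.factorial : ℂ) * ((n - m).factorial : ℂ)) * ((-1) ^ q * c x q) := by ring
    _ = (-1) ^ m * x ^ k * tt ^ (4 * l + 2 * q) /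
    ((k.factorial : ℂ) * (l.factorial : ℂ) * ((n - m).factorial : ℂ)) * hh x q := by
      rw [← hc, pow_add]; ring
    _ = _ := by rw [← he, pow_add]; ring

lemma reorder (f : ℕ → ℕ → ℂ) (N : ℕ) :
    ∑ n ∈ Finset.range (N + 1), ∑ m ∈ Finset.Icc ((n + 1) / 2) n, f m (n - m) =
    ∑ m ∈ Finset.range (N + 1), ∑ j ∈ Finset.range (m + 1), if m + j ≤ N then f m j else 0 := by
  have h : ∀ m ∈ Finset.range (N + 1), (∑ j ∈ Finset.range (m + 1), if m + j ≤ N then f m j else 0)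
      = ∑ j ∈ (Finset.range (m + 1)).filter (fun j => m + j ≤ N), f m j := by
    intro m _; rw [Finset.sum_filter]
  rw [Finset.sum_congr rfl h, Finset.sum_sigma', Finset.sum_sigma']
  refine Finset.sum_bij' (fun p _ => ⟨p.2, p.1 - p.2⟩) (fun p _ => ⟨p.1 + p.2, p.1⟩) ?_ ?_ ?_ ?_ ?_
  · rintro ⟨n, m⟩ h
    simp only [Finset.mem_sigma, Finset.mem_range, Finset.mem_Icc, Finset.mem_filter] at *
    omega
  · rintro ⟨n, m⟩ h
    simp only [Finset.mem_sigma, Finset.mem_range, Finset.mem_Icc, Finset.mem_filter] at *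
    omega
  · rintro ⟨n, m⟩ h
    simp only [Finset.mem_sigma, Finset.mem_range, Finset.mem_Icc] at *
    simp; omega
  · rintro ⟨n, m⟩ h
    simp
  · rintro ⟨n, m⟩ h
    simp

lemma trunc_bd (x ζ : ℂ) (h1 : ‖ζ‖ = 1) (N : ℕ) : ∃ C : ℝ, ∀ δ : ℝ, 0 < δ → δ ≤ 1 →
    ‖(∑ m ∈ Finset.range (N + 1), ∑ j ∈ Finset.range (m + 1), ((δ : ℂ) / ζ) ^ (m + j) * bb x m j)
      - ∑ n ∈ Finset.range (N + 1), ((δ : ℂ) / ζ) ^ n * BB x n‖ ≤ C * δ ^ (N + 1) := by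
  refine ⟨∑ m ∈ Finset.range (N + 1), ∑ j ∈ Finset.range (m + 1), ‖bb x m j‖, ?_⟩
  intro δ h0 hle
  have e : ∑ n ∈ Finset.range (N + 1), ((δ : ℂ) / ζ) ^ n * BB x n =
      ∑ n ∈ Finset.range (N + 1), ∑ m ∈ Finset.Icc ((n + 1) / 2) n,
        (fun m j => ((δ : ℂ) / ζ) ^ (m + j) * bb x m j) m (n - m) := by
    apply Finset.sum_congr rfl
    intro n _
    rw [BB, Finset.mul_sum]
    apply Finset.sum_congr rfl
    intro m hm
    rw [Finset.mem_Icc] at hm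
    simp only
    rw [show m + (n - m) = n by omega]
  rw [e, reorder (fun m j => ((δ : ℂ) / ζ) ^ (m + j) * bb x m j) N, ← Finset.sum_sub_distrib, Finset.sum_mul]
  refine norm_sum_le_of_le _ fun m _ => ?_
  rw [← Finset.sum_sub_distrib, Finset.sum_mul]
  refine norm_sum_le_of_le _ fun j _ => ?_
  split_ifs with h
  · simp; positivity
  · rw [sub_zero, norm_mul, norm_pow, norm_div, h1, Complex.norm_real, Real.norm_eq_abs,
      abs_of_pos h0, div_one, mul_comm]
    gcongr ‖bb x m j‖ * ?_
    exact pow_le_pow_of_le_one h0.le hle (by omega)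

noncomputable def ZZ (x ε w : ℂ) : ℂ := -(ε * (4 * w ^ 3 + x * w ^ 2) + ε ^ 2 * w ^ 4)

lemma ZZ_pow (x ε w : ℂ) (m : ℕ) : ZZ x ε w ^ m / (m.factorial : ℂ) =
    ∑ j ∈ Finset.range (m + 1), ∑ k ∈ Finset.range (m - j + 1), ε ^ (m + j) *
      ((-1) ^ m * x ^ k * 4 ^ (m - j - k) /
    ((k.factorial : ℂ) * ((m - j - k).factorial : ℂ) * (j.factorial : ℂ))) * w ^ (3 * m + j - k) := by
  unfold ZZ
  rw [neg_pow, add_comm (ε * _), add_pow, Finset.mul_sum, Finset.sum_div]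
  apply Finset.sum_congr rfl
  intro j hj
  rw [Finset.mem_range] at hj
  rw [mul_pow ε _ (m - j), add_comm (4 * w ^ 3), add_pow, Finset.mul_sum, Finset.mul_sum,
    Finset.sum_mul, Finset.mul_sum, Finset.sum_div]
  apply Finset.sum_congr rfl
  intro k hk
  rw [Finset.mem_range] at hk
  obtain ⟨l, hl⟩ : ∃ l, m - j - k = l := ⟨_, rfl⟩
  have hm : m = k + l + j := by omega
  subst hm
  rw [show k + l + j - j = k + l by omega, show k + l - k = l by omega,
    show 3 * (k + l + j) + j - k = 2 * k + 3 * l + 4 * j by omega]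
  have c1 : (((k + l + j).choose j : ℕ) : ℂ) = ((k + l + j).factorial : ℂ) /
      ((j.factorial : ℂ) * ((k + l).factorial : ℂ)) := by
    rw [Nat.cast_choose ℂ (by omega), show k + l + j - j = k + l by omega]
  have c2 : (((k + l).choose k : ℕ) : ℂ) = ((k + l).factorial : ℂ) /
      ((k.factorial : ℂ) * (l.factorial : ℂ)) := by
    rw [Nat.cast_choose ℂ (by omega), show k + l - k = l by omega]
  rw [c1, c2]
  have := fac_ne k
  have := fac_ne l
  have := fac_ne j
  have := fac_ne (k + l)
  have := fac_ne (k + l + j)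
  field_simp
  ring

noncomputable def Gs (ζ x : ℂ) (σ : ℝ) : ℂ := Complex.exp (-6 * (ζ * σ) ^ 2 - 2 * x * (ζ * σ))

lemma GZ_expand (ζ x ε : ℂ) (m : ℕ) (σ : ℝ) :
    Gs ζ x σ * (ZZ x ε (ζ * σ) ^ m / (m.factorial : ℂ)) =
    ∑ j ∈ Finset.range (m + 1), ∑ k ∈ Finset.range (m - j + 1), ε ^ (m + j) *
      ((-1) ^ m * x ^ k * 4 ^ (m - j - k) /
    ((k.factorial : ℂ) * ((m - j - k).factorial : ℂ) * (j.factorial : ℂ))) *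
      gi ζ x (3 * m + j - k) σ := by
  rw [ZZ_pow, Finset.mul_sum]
  apply Finset.sum_congr rfl
  intro j _
  rw [Finset.mul_sum]
  apply Finset.sum_congr rfl
  intro k _
  unfold gi Gs
  ring

lemma GZ_int {ζ : ℂ} (x ε : ℂ) (h1 : ‖ζ‖ = 1) (h2 : 0 < (ζ ^ 2).re) (m : ℕ) :
    Integrable (fun σ : ℝ => Gs ζ x σ * (ZZ x ε (ζ * σ) ^ m / (m.factorial : ℂ))) := by
  simp_rw [GZ_expand]
  exact integrable_finsetSum _ fun j _ => integrable_finsetSum _ fun k _ =>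
    (gi_int x h1 h2 _).const_mul _

lemma GZ_val {ζ : ℂ} (x ε : ℂ) (h1 : ‖ζ‖ = 1) (h2 : 0 < (ζ ^ 2).re) (h3 : 0 < ζ.re) (m : ℕ) :
    ζ * ∫ σ : ℝ, Gs ζ x σ * (ZZ x ε (ζ * σ) ^ m / (m.factorial : ℂ)) =
    (Real.sqrt (π / 6) : ℂ) * Complex.exp (x ^ 2 / 6) *
      ∑ j ∈ Finset.range (m + 1), ε ^ (m + j) * bb x m j := by
  simp_rw [GZ_expand]
  rw [integral_finsetSum _ fun j _ => integrable_finsetSum _ fun k _ =>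
    (gi_int x h1 h2 _).const_mul _, Finset.mul_sum, Finset.mul_sum]
  apply Finset.sum_congr rfl
  intro j _
  rw [integral_finsetSum _ fun k _ => (gi_int x h1 h2 _).const_mul _, bb, Finset.mul_sum,
    Finset.mul_sum, Finset.mul_sum]
  apply Finset.sum_congr rfl
  intro k _
  rw [integral_const_mul, mul_left_comm, mom_eq x h1 h2 h3]
  ring

lemma ZZ_bd {ζ : ℂ} (x : ℂ) (h1 : ‖ζ‖ = 1) {δ : ℝ} (h0 : 0 < δ) (hle : δ ≤ 1) (σ : ℝ) :
    ‖ZZ x ((δ : ℂ) / ζ) (ζ * σ)‖ ≤ δ * ((5 + ‖x‖) * (1 + |σ| ^ 4)) := by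
  unfold ZZ
  rw [norm_neg]
  have t1 : ‖(δ : ℂ) / ζ * (4 * (ζ * σ) ^ 3 + x * (ζ * σ) ^ 2)‖ ≤
      δ * (4 * |σ| ^ 3 + ‖x‖ * |σ| ^ 2) := by
    rw [norm_mul, norm_div, h1, Complex.norm_real, Real.norm_eq_abs, abs_of_pos h0, div_one]
    gcongr
    refine (norm_add_le _ _).trans ?_
    simp [h1]
  have t2 : ‖((δ : ℂ) / ζ) ^ 2 * (ζ * σ) ^ 4‖ ≤ δ * |σ| ^ 4 := by
    simp only [norm_mul, norm_pow, norm_div, h1, Complex.norm_real, Real.norm_eq_abs,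
      abs_of_pos h0, div_one, one_mul]
    gcongr
    nlinarith
  refine (norm_add_le _ _).trans ?_
  have p2 : |σ| ^ 2 ≤ 1 + |σ| ^ 4 := by nlinarith [sq_nonneg (|σ| ^ 2 - 1)]
  have p3 : |σ| ^ 3 ≤ 1 + |σ| ^ 4 := by
    nlinarith [sq_nonneg (|σ| ^ 2 - |σ|), sq_nonneg (|σ| ^ 2 - 1)]
  have p4 : |σ| ^ 4 ≤ 1 + |σ| ^ 4 := by linarith
  have q2 : ‖x‖ * |σ| ^ 2 ≤ ‖x‖ * (1 + |σ| ^ 4) := by gcongr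
  have : 4 * |σ| ^ 3 + ‖x‖ * |σ| ^ 2 + |σ| ^ 4 ≤ (5 + ‖x‖) * (1 + |σ| ^ 4) := by linarith
  have := mul_le_mul_of_nonneg_left this h0.le
  linarith

lemma GE_bd {ζ : ℂ} (x : ℂ) (h1 : ‖ζ‖ = 1) (h2 : 0 < (ζ ^ 2).re) {δ : ℝ} (h0 : 0 < δ)
    (hx : ‖x‖ * δ ≤ (ζ ^ 2).re) (σ : ℝ) :
    ‖Gs ζ x σ‖ * max 1 (Real.exp (ZZ x ((δ : ℂ) / ζ) (ζ * σ)).re) ≤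
      Real.exp (2 * ‖x‖ ^ 2 / (ζ ^ 2).re) * Real.exp (-((ζ ^ 2).re / 2) * σ ^ 2) := by
  have hζ : ζ ≠ 0 := by intro h; simp [h] at h1
  rw [mul_max_of_nonneg _ _ (norm_nonneg _), ← Real.exp_add]
  set κ := (ζ ^ 2).re with hκ
  have hs : 2 * ‖x‖ * |σ| - κ / 2 * σ ^ 2 ≤ 2 * ‖x‖ ^ 2 / κ := by
    rw [le_div_iff₀ h2, ← sq_abs σ]
    linear_combination (1 / 2) * sq_nonneg (κ * |σ| - 2 * ‖x‖)
  have hκσ : 0 ≤ κ * σ ^ 2 := by positivity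
  apply max_le
  · rw [mul_one]
    refine (gauss_bd x h1 h2 σ).trans ?_
    rw [← Real.exp_add]
    apply Real.exp_le_exp.2
    rw [← hκ]
    have : ‖x‖ ^ 2 / (5 * κ) ≤ 2 * ‖x‖ ^ 2 / κ := by
      rw [div_le_div_iff₀ (by positivity) h2]
      have : 0 ≤ ‖x‖ ^ 2 * κ := by positivity
      linarith
    linarith
  · rw [← Complex.norm_exp, Gs, ← norm_mul, ← Complex.exp_add, Complex.norm_exp]
    apply Real.exp_le_exp.2
    have e : -6 * (ζ * σ) ^ 2 - 2 * x * (ζ * σ) + ZZ x ((δ : ℂ) / ζ) (ζ * σ) =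
        -(ζ ^ 2 * ((σ ^ 2 * ((δ * σ + 2) ^ 2 + 2) : ℝ) : ℂ)) -
          x * ζ * ((2 * σ + δ * σ ^ 2 : ℝ) : ℂ) := by
      unfold ZZ; push_cast; field_simp; ring
    rw [e, Complex.sub_re, Complex.neg_re, Complex.re_mul_ofReal, ← hκ]
    have e2 : -(x * ζ * ((2 * σ + δ * σ ^ 2 : ℝ) : ℂ)).re ≤ ‖x‖ * (2 * |σ| + δ * σ ^ 2) := by
      have b1 := Complex.abs_re_le_norm (x * ζ * ((2 * σ + δ * σ ^ 2 : ℝ) : ℂ))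
      rw [norm_mul, norm_mul, h1, mul_one, Complex.norm_real, Real.norm_eq_abs] at b1
      have b2 : |2 * σ + δ * σ ^ 2| ≤ 2 * |σ| + δ * σ ^ 2 := by
        refine (abs_add_le _ _).trans ?_
        rw [abs_mul, abs_of_nonneg (show 0 ≤ δ * σ ^ 2 by positivity)]; norm_num
      have b3 := mul_le_mul_of_nonneg_left b2 (norm_nonneg x)
      linarith [neg_abs_le (x * ζ * ((2 * σ + δ * σ ^ 2 : ℝ) : ℂ)).re]
    have e3 : 2 * (κ * σ ^ 2) ≤ κ * (σ ^ 2 * ((δ * σ + 2) ^ 2 + 2)) := by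
      have : 0 ≤ κ * σ ^ 2 * (δ * σ + 2) ^ 2 := by positivity
      linarith
    have e4 : ‖x‖ * δ * σ ^ 2 ≤ κ * σ ^ 2 := by gcongr
    linarith

lemma laplace {ζ : ℂ} (x : ℂ) (h1 : ‖ζ‖ = 1) (h2 : 0 < (ζ ^ 2).re) (h3 : 0 < ζ.re) (N : ℕ) :
    ∃ C : ℝ, ∀ δ : ℝ, 0 < δ → δ ≤ 1 → ‖x‖ * δ ≤ (ζ ^ 2).re →
    ‖ζ * (∫ σ : ℝ, Gs ζ x σ * Complex.exp (ZZ x ((δ : ℂ) / ζ) (ζ * σ))) -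
      (Real.sqrt (π / 6) : ℂ) * Complex.exp (x ^ 2 / 6) *
        ∑ n ∈ Finset.range (N + 1), ((δ : ℂ) / ζ) ^ n * BB x n‖ ≤ C * δ ^ (N + 1) := by
  obtain ⟨C1, hC1⟩ := trunc_bd x ζ h1 N
  set κ := (ζ ^ 2).re with hκ
  set K : ℂ := (Real.sqrt (π / 6) : ℂ) * Complex.exp (x ^ 2 / 6) with hK
  set D : ℝ := Real.exp (2 * ‖x‖ ^ 2 / κ) with hD
  have hbint : ∀ q, Integrable (fun σ : ℝ => (1 + |σ| ^ 4) ^ q * Real.exp (-(κ / 2) * σ ^ 2)) := by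
    intro q
    simp_rw [add_pow, Finset.sum_mul]
    refine integrable_finsetSum _ fun j _ => ?_
    have := (int_pow_gauss (4 * (q - j)) (b := κ / 2) (by positivity)).const_mul (q.choose j : ℝ)
    refine this.congr (Eventually.of_forall fun σ => ?_)
    simp only [one_pow, pow_mul]
    ring
  set J : ℝ := ∫ σ : ℝ, (1 + |σ| ^ 4) ^ (N + 1) * Real.exp (-(κ / 2) * σ ^ 2) with hJ
  refine ⟨(5 + ‖x‖) ^ (N + 1) * D * J + ‖K‖ * C1, ?_⟩
  intro δ h0 hle hx
  set ε : ℂ := (δ : ℂ) / ζ with hε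
  have hGE : Integrable (fun σ : ℝ => Gs ζ x σ * Complex.exp (ZZ x ε (ζ * σ))) := by
    have hc : Continuous (fun σ : ℝ => Gs ζ x σ * Complex.exp (ZZ x ε (ζ * σ))) := by
      unfold Gs ZZ; fun_prop
    refine integrable_of_bd hc 0 (b := κ / 2) (C := D) (by positivity) fun σ => ?_
    have := GE_bd x h1 h2 h0 hx σ
    rw [norm_mul, Complex.norm_exp, pow_zero, one_mul]
    refine le_trans ?_ this
    gcongr
    exact le_max_right _ _
  have hmain : ζ * (∫ σ : ℝ, Gs ζ x σ * Complex.exp (ZZ x ε (ζ * σ))) -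
      K * ∑ m ∈ Finset.range (N + 1), ∑ j ∈ Finset.range (m + 1), ε ^ (m + j) * bb x m j =
      ζ * ∫ σ : ℝ, Gs ζ x σ * (Complex.exp (ZZ x ε (ζ * σ)) -
        ∑ m ∈ Finset.range (N + 1), ZZ x ε (ζ * σ) ^ m / (m.factorial : ℂ)) := by
    simp_rw [mul_sub, Finset.mul_sum (Finset.range (N + 1))]
    rw [integral_sub hGE (integrable_finsetSum _ fun m _ => GZ_int x ε h1 h2 m),
      integral_finsetSum _ fun m _ => GZ_int x ε h1 h2 m, mul_sub, Finset.mul_sum (Finset.range (N + 1))]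
    congr 1
    apply Finset.sum_congr rfl
    intro m _
    rw [GZ_val x ε h1 h2 h3]
  have hrem : ‖∫ σ : ℝ, Gs ζ x σ * (Complex.exp (ZZ x ε (ζ * σ)) -
        ∑ m ∈ Finset.range (N + 1), ZZ x ε (ζ * σ) ^ m / (m.factorial : ℂ))‖ ≤
      ((5 + ‖x‖) ^ (N + 1) * D * δ ^ (N + 1)) * J := by
    rw [hJ, ← integral_const_mul]
    apply norm_integral_le_of_norm_le ((hbint (N + 1)).const_mul _)
    refine Eventually.of_forall fun σ => ?_
    rw [norm_mul]
    have r1 := exp_rem (N + 1) (ZZ x ε (ζ * σ))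
    have r2 := GE_bd x h1 h2 h0 hx σ
    have r3 : ‖ZZ x ε (ζ * σ)‖ ^ (N + 1) ≤ (δ * ((5 + ‖x‖) * (1 + |σ| ^ 4))) ^ (N + 1) := by
      gcongr; exact ZZ_bd x h1 h0 hle σ
    calc _ ≤ ‖Gs ζ x σ‖ * (‖ZZ x ε (ζ * σ)‖ ^ (N + 1) * max 1 (Real.exp (ZZ x ε (ζ * σ)).re)) := by
          gcongr
      _ = ‖ZZ x ε (ζ * σ)‖ ^ (N + 1) * (‖Gs ζ x σ‖ * max 1 (Real.exp (ZZ x ε (ζ * σ)).re)) := by ring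
      _ ≤ (δ * ((5 + ‖x‖) * (1 + |σ| ^ 4))) ^ (N + 1) * (D * Real.exp (-(κ / 2) * σ ^ 2)) := by
          gcongr
      _ = _ := by rw [mul_pow, mul_pow]; ring
  have htr := hC1 δ h0 hle
  have hfin : ζ * (∫ σ : ℝ, Gs ζ x σ * Complex.exp (ZZ x ε (ζ * σ))) -
      K * ∑ n ∈ Finset.range (N + 1), ε ^ n * BB x n =
      ζ * (∫ σ : ℝ, Gs ζ x σ * (Complex.exp (ZZ x ε (ζ * σ)) -
        ∑ m ∈ Finset.range (N + 1), ZZ x ε (ζ * σ) ^ m / (m.factorial : ℂ))) +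
      K * ((∑ m ∈ Finset.range (N + 1), ∑ j ∈ Finset.range (m + 1), ε ^ (m + j) * bb x m j)
        - ∑ n ∈ Finset.range (N + 1), ε ^ n * BB x n) := by
    rw [← hmain]; ring
  rw [hfin]
  refine (norm_add_le _ _).trans ?_
  rw [norm_mul, norm_mul, h1, one_mul]
  have := mul_le_mul_of_nonneg_left htr (norm_nonneg K)
  linarith

lemma FF_int (x y : ℂ) : Integrable (fun t : ℝ => FF x y t) := by
  obtain ⟨C, _, hC⟩ := FF_bd x y one_pos
  have hc : Continuous (fun t : ℝ => FF x y t) := by unfold FF; fun_prop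
  refine integrable_of_bd hc 0 one_pos (C := C) fun u => ?_
  have := hC 0 (by simp) u
  simpa [rot] using this

lemma P_eq (x y : ℂ) : P x y = 1 / 2 * ∫ t : ℝ, FF x y t := by
  have hi := FF_int x y
  have hn : Integrable (fun t : ℝ => FF x y ((-t : ℝ) : ℂ)) := hi.comp_neg
  rw [← intervalIntegral.integral_Iic_add_Ioi (b := 0) hi.integrableOn hi.integrableOn]
  have h := integral_comp_neg_Ioi 0 (fun t : ℝ => FF x y t)
  rw [neg_zero] at h
  rw [← h, ← integral_add hn.integrableOn hi.integrableOn, P, ← integral_const_mul]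
  congr 1
  ext t
  rw [Complex.cos]
  unfold FF
  rw [show -((-t : ℝ) : ℂ) ^ 4 - x * ((-t : ℝ) : ℂ) ^ 2 + Complex.I * y * ((-t : ℝ) : ℂ) =
    (-(t : ℂ) ^ 4 - x * (t : ℂ) ^ 2) + -(y * t) * Complex.I by push_cast; ring,
    show -(t : ℂ) ^ 4 - x * (t : ℂ) ^ 2 + Complex.I * y * (t : ℂ) =
    (-(t : ℂ) ^ 4 - x * (t : ℂ) ^ 2) + (y * t) * Complex.I by ring,
    Complex.exp_add, Complex.exp_add]
  ring

lemma P_formula (x y : ℂ) {α ρ : ℝ} (h0 : 0 ≤ α) (h1 : α < π / 8) (hρ : 0 < ρ)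
    (hy : Complex.I * y = 4 * (rot α * ρ) ^ 3) :
    P x y = 1 / 2 * (rot α / ρ) * Complex.exp (3 * (rot α * ρ) ^ 4 - x * (rot α * ρ) ^ 2) *
      ∫ σ : ℝ, Gs (rot α ^ 2) x σ *
        Complex.exp (ZZ x (((1 / ρ ^ 2 : ℝ) : ℂ) / rot α ^ 2) (rot α ^ 2 * σ)) := by
  have hr : rot α ≠ 0 := by unfold rot; exact Complex.exp_ne_zero _
  have hρ' : (ρ : ℂ) ≠ 0 := by exact_mod_cast hρ.ne'
  rw [P_eq, pearcey_rot x y h0 h1]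
  have e1 := integral_add_left_eq_self (μ := volume) (fun u : ℝ => FF x y (rot α * u)) ρ
  have e2 := Measure.integral_comp_div (fun u : ℝ => FF x y (rot α * ((ρ + u : ℝ) : ℂ))) ρ
  rw [e1, abs_of_pos hρ, Complex.real_smul] at e2
  have e3 : ∫ u : ℝ, FF x y (rot α * u) =
      (1 / (ρ : ℂ)) * ∫ σ : ℝ, FF x y (rot α * ((ρ + σ / ρ : ℝ) : ℂ)) := by
    rw [e2]; field_simp
  have e4 : ∀ σ : ℝ, FF x y (rot α * ((ρ + σ / ρ : ℝ) : ℂ)) =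
      Complex.exp (3 * (rot α * ρ) ^ 4 - x * (rot α * ρ) ^ 2) * (Gs (rot α ^ 2) x σ *
        Complex.exp (ZZ x (((1 / ρ ^ 2 : ℝ) : ℂ) / rot α ^ 2) (rot α ^ 2 * σ))) := by
    intro σ
    unfold FF Gs
    rw [← Complex.exp_add, ← Complex.exp_add, hy]
    congr 1
    unfold ZZ
    push_cast
    field_simp
    ring
  simp_rw [e3, e4]
  rw [integral_const_mul]
  ring

lemma const_eq : (((2 : ℝ) ^ ((5 : ℝ) / 6) / Real.sqrt (π / 3) : ℝ) : ℂ) =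
    tt / (Real.sqrt (π / 6) : ℂ) := by
  have h2 : tt = (((2 : ℝ) ^ ((1 : ℝ) / 3) : ℝ) : ℂ) := by
    rw [Complex.ofReal_cpow (by norm_num), tt]; norm_num
  rw [h2, ← Complex.ofReal_div]
  congr 1
  have h3 : Real.sqrt (π / 3) = Real.sqrt 2 * Real.sqrt (π / 6) := by
    rw [← Real.sqrt_mul (by norm_num)]; congr 1; ring
  have h4 : (2 : ℝ) ^ ((5 : ℝ) / 6) = (2 : ℝ) ^ ((1 : ℝ) / 3) * Real.sqrt 2 := by
    rw [Real.sqrt_eq_rpow, ← Real.rpow_add (by norm_num)]; norm_num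
  have h5 : Real.sqrt 2 ≠ 0 := by positivity
  have h6 : Real.sqrt (π / 6) ≠ 0 := by positivity
  rw [h3, h4]
  field_simp

lemma four_cpow (s : ℂ) (k : ℕ) (h : s = -((k : ℂ) * 2 / 3)) : (4 : ℂ) ^ s = (tt ^ (4 * k))⁻¹ := by
  have h4 : (4 : ℂ) ^ ((1 : ℂ) / 3) = tt ^ 2 := by
    have : (4 : ℂ) = ((4 : ℝ) : ℂ) := by norm_num
    have h' : (4 : ℝ) = 2 * 2 := by norm_num
    rw [this, h', Complex.ofReal_mul, Complex.mul_cpow_ofReal_nonneg (by norm_num) (by norm_num)]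
    rw [tt]; norm_num; ring
  rw [h, Complex.cpow_neg, show (k : ℂ) * 2 / 3 = ((2 * k : ℕ) : ℂ) * (1 / 3) by push_cast; ring,
    Complex.cpow_nat_mul, h4, ← pow_mul]
  congr 2
  ring

lemma y_cpow {r θ : ℝ} (hr : 0 < r) (h1 : -π < θ) (h2 : θ ≤ π) (s : ℂ) :
    ((r : ℂ) * Complex.exp (Complex.I * (θ : ℂ))) ^ s =
      Complex.exp (s * ((Real.log r : ℂ) + Complex.I * θ)) := by
  have e : (r : ℂ) * Complex.exp (Complex.I * (θ : ℂ)) =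
      Complex.exp ((Real.log r : ℂ) + Complex.I * θ) := by
    rw [Complex.exp_add, ← Complex.ofReal_exp, Real.exp_log hr]
  rw [e, Complex.cpow_def_of_ne_zero (Complex.exp_ne_zero _), Complex.log_exp (by simpa using h1)
    (by simpa using h2), mul_comm]

lemma key_eq (x : ℂ) (θ : ℝ) (hθ : θ ∈ Set.Ico (-(π / 2)) (-(π / 8))) (N : ℕ) (r : ℝ)
    (hr : 0 < r) (α ρ : ℝ) (hα : α = (θ + π / 2) / 3) (hρ : ρ = (r / 4) ^ ((1 : ℝ) / 3)) :
    P x ((r : ℂ) * Complex.exp (Complex.I * (θ : ℂ))) *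
            ((((2 : ℝ) ^ ((5 : ℝ) / 6) / Real.sqrt (π / 3) : ℝ)) : ℂ) *
            ((r : ℂ) * Complex.exp (Complex.I * (θ : ℂ))) ^ ((1 : ℂ) / 3) *
            Complex.exp
              (-3 * (4 : ℂ) ^ (-(4 : ℂ) / 3) * Complex.exp (2 * (π : ℂ) * Complex.I / 3) *
                  ((r : ℂ) * Complex.exp (Complex.I * (θ : ℂ))) ^ ((4 : ℂ) / 3)
                + (4 : ℂ) ^ (-(2 : ℂ) / 3) * x *
                  ((r : ℂ) * Complex.exp (Complex.I * (θ : ℂ))) ^ ((2 : ℂ) / 3) *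
                  Complex.exp ((π : ℂ) * Complex.I / 3)
                - x ^ 2 / 6)
          - ∑ n ∈ Finset.range (N + 1),
              Complex.exp (-(2 * (n : ℂ) + 1) * (π : ℂ) * Complex.I / 6) * A x n *
                ((r : ℂ) * Complex.exp (Complex.I * (θ : ℂ))) ^ (-(2 * (n : ℂ)) / 3) =
    Complex.exp (π * Complex.I / 6) ^ (-1 : ℤ) *
      ((Real.sqrt (π / 6) : ℂ) * Complex.exp (x ^ 2 / 6))⁻¹ *
      (rot α ^ 2 * (∫ σ : ℝ, Gs (rot α ^ 2) x σ *
        Complex.exp (ZZ x (((1 / ρ ^ 2 : ℝ) : ℂ) / rot α ^ 2) (rot α ^ 2 * σ))) -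
      (Real.sqrt (π / 6) : ℂ) * Complex.exp (x ^ 2 / 6) *
        ∑ n ∈ Finset.range (N + 1), (((1 / ρ ^ 2 : ℝ) : ℂ) / rot α ^ 2) ^ n * BB x n) := by
  have hpi := Real.pi_pos
  have hρ0 : 0 < ρ := by rw [hρ]; positivity
  have hyp := y_cpow hr (θ := θ) (by linarith [hθ.1]) (by linarith [hθ.2])
  obtain ⟨Y, hY⟩ : ∃ Y, Complex.exp ((1 : ℂ) / 3 * ((Real.log r : ℂ) + Complex.I * θ)) = Y :=
    ⟨_, rfl⟩
  have hY0 : Y ≠ 0 := by rw [← hY]; exact Complex.exp_ne_zero _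
  obtain ⟨e, he⟩ : ∃ e, Complex.exp (π * Complex.I / 6) = e := ⟨_, rfl⟩
  have he0 : e ≠ 0 := by rw [← he]; exact Complex.exp_ne_zero _
  have hy1 : (r : ℂ) * Complex.exp (Complex.I * (θ : ℂ)) = Y ^ 3 := by
    have := hyp 1
    rw [Complex.cpow_one] at this
    rw [this, ← hY, ← Complex.exp_nat_mul]; congr 1; push_cast; ring
  have hy4 : ((r : ℂ) * Complex.exp (Complex.I * (θ : ℂ))) ^ ((4 : ℂ) / 3) = Y ^ 4 := by
    rw [hyp, ← hY, ← Complex.exp_nat_mul]; congr 1; push_cast; ring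
  have hy2 : ((r : ℂ) * Complex.exp (Complex.I * (θ : ℂ))) ^ ((2 : ℂ) / 3) = Y ^ 2 := by
    rw [hyp, ← hY, ← Complex.exp_nat_mul]; congr 1; push_cast; ring
  have hyn : ∀ n : ℕ, ((r : ℂ) * Complex.exp (Complex.I * (θ : ℂ))) ^ (-(2 * (n : ℂ)) / 3) =
      (Y ^ (2 * n))⁻¹ := by
    intro n
    rw [hyp, ← hY, ← Complex.exp_nat_mul, ← Complex.exp_neg]; congr 1; push_cast; ring
  have hyy : ((r : ℂ) * Complex.exp (Complex.I * (θ : ℂ))) ^ ((1 : ℂ) / 3) = Y := by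
    rw [hyp, hY]
  have he4 : Complex.exp (2 * (π : ℂ) * Complex.I / 3) = e ^ 4 := by
    rw [← he, ← Complex.exp_nat_mul]; congr 1; push_cast; ring
  have he2 : Complex.exp ((π : ℂ) * Complex.I / 3) = e ^ 2 := by
    rw [← he, ← Complex.exp_nat_mul]; congr 1; push_cast; ring
  have he3 : e ^ 3 = Complex.I := by
    rw [← he, ← Complex.exp_nat_mul]
    refine Eq.trans ?_ Complex.exp_pi_div_two_mul_I
    congr 1; push_cast; ring
  have hen : ∀ n : ℕ, Complex.exp (-(2 * (n : ℂ) + 1) * (π : ℂ) * Complex.I / 6) =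
      (e ^ (2 * n + 1))⁻¹ := by
    intro n
    rw [← he, ← Complex.exp_nat_mul, ← Complex.exp_neg]; congr 1; push_cast; ring
  have htt : tt = Complex.exp ((Real.log 2 : ℂ) / 3) := by
    rw [tt, Complex.cpow_def_of_ne_zero two_ne_zero, ← Complex.ofReal_ofNat, ← Complex.ofReal_log (by norm_num)]
    congr 1; ring
  have hT : rot α * ρ = e * Y / tt ^ 2 := by
    have hρe : (ρ : ℂ) = Complex.exp (((Real.log r - 2 * Real.log 2) / 3 : ℝ) : ℂ) := by
      rw [hρ, Real.rpow_def_of_pos (by positivity), Real.log_div hr.ne' (by norm_num),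
        show (4 : ℝ) = 2 ^ 2 by norm_num, Real.log_pow, ← Complex.ofReal_exp]
      congr 2
      push_cast; ring
    rw [hρe, rot, hα, ← he, ← hY, htt, ← Complex.exp_nat_mul, ← Complex.exp_add, ← Complex.exp_add,
      ← Complex.exp_sub]
    congr 1
    push_cast
    ring
  have hρ' : (ρ : ℂ) ≠ 0 := by exact_mod_cast hρ0.ne'
  have hr0 : rot α ≠ 0 := by unfold rot; exact Complex.exp_ne_zero _
  have ht0 := tt_ne
  have ht6 : tt ^ 6 = 4 := by
    rw [show 6 = 3 * 2 by norm_num, pow_mul, tt_cube]; norm_num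
  have hIy : Complex.I * ((r : ℂ) * Complex.exp (Complex.I * (θ : ℂ))) = 4 * (rot α * ρ) ^ 3 := by
    rw [hy1, hT, div_pow, ← pow_mul, ht6, mul_pow, he3]; ring
  have hP := P_formula x _ (α := α) (by rw [hα]; linarith [hθ.1]) (by rw [hα]; linarith [hθ.2])
    hρ0 hIy
  rw [hP, const_eq, hyy, he4, hy4, hy2, he2, four_cpow (-(4 : ℂ) / 3) 2 (by push_cast; ring),
    four_cpow (-(2 : ℂ) / 3) 1 (by push_cast; ring), he]
  simp_rw [hen, hyn, A_eq]
  set S := ∫ σ : ℝ, Gs (rot α ^ 2) x σ *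
        Complex.exp (ZZ x (((1 / ρ ^ 2 : ℝ) : ℂ) / rot α ^ 2) (rot α ^ 2 * σ)) with hS
  have hsq : (Real.sqrt (π / 6) : ℂ) ≠ 0 := by
    exact_mod_cast (Real.sqrt_pos.2 (by positivity)).ne'
  have hex := Complex.exp_ne_zero (x ^ 2 / 6)
  have hE : Complex.exp (3 * (rot α * ρ) ^ 4 - x * (rot α * ρ) ^ 2) *
      Complex.exp (-3 * (tt ^ (4 * 2))⁻¹ * e ^ 4 * Y ^ 4 + (tt ^ (4 * 1))⁻¹ * x * Y ^ 2 * e ^ 2 -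
        x ^ 2 / 6) = (Complex.exp (x ^ 2 / 6))⁻¹ := by
    rw [← Complex.exp_add, ← Complex.exp_neg, hT]
    congr 1
    field_simp
    ring
  have hlr : rot α / ρ = rot α ^ 2 * tt ^ 2 / (e * Y) := by
    have : rot α / ρ = rot α ^ 2 / (rot α * ρ) := by field_simp
    rw [this, hT]; field_simp
  have hee : (((1 / ρ ^ 2 : ℝ) : ℂ) / rot α ^ 2) = tt ^ 4 / (e ^ 2 * Y ^ 2) := by
    have : (((1 / ρ ^ 2 : ℝ) : ℂ) / rot α ^ 2) = 1 / (rot α * ρ) ^ 2 := by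
      push_cast; field_simp
    rw [this, hT]; field_simp
  rw [mul_sub]
  congr 1
  · calc _ = 1 / 2 * (rot α / ρ) * S * (tt / (Real.sqrt (π / 6) : ℂ)) * Y *
        (Complex.exp (3 * (rot α * ρ) ^ 4 - x * (rot α * ρ) ^ 2) *
      Complex.exp (-3 * (tt ^ (4 * 2))⁻¹ * e ^ 4 * Y ^ 4 + (tt ^ (4 * 1))⁻¹ * x * Y ^ 2 * e ^ 2 -
        x ^ 2 / 6)) := by ring
      _ = tt ^ 3 / 2 * (e⁻¹ * ((Real.sqrt (π / 6) : ℂ) * Complex.exp (x ^ 2 / 6))⁻¹ *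
          (rot α ^ 2 * S)) := by
        rw [hE, hlr]; field_simp
      _ = _ := by rw [tt_cube, zpow_neg_one]; ring
  · rw [hee, zpow_neg_one, mul_assoc, inv_mul_cancel_left₀ (mul_ne_zero hsq hex), Finset.mul_sum]
    apply Finset.sum_congr rfl
    intro n _
    rw [div_pow, mul_pow, ← pow_mul, ← pow_mul, ← pow_mul]
    field_simp
    try ring

/-- Complete asymptotic expansion of `P(x,y)` for large `|y|` in the sector
`−π/2 ≤ arg y < −π/8` (case 1): only the saddle point `t₁` contributes. -/
theorem pearcey_asymptotic_case1 (x : ℂ) (θ : ℝ)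
    (hθ : θ ∈ Set.Ico (-(π / 2)) (-(π / 8))) (N : ℕ) :
    (fun r : ℝ =>
        P x ((r : ℂ) * Complex.exp (Complex.I * (θ : ℂ))) *
            ((((2 : ℝ) ^ ((5 : ℝ) / 6) / Real.sqrt (π / 3) : ℝ)) : ℂ) *
            ((r : ℂ) * Complex.exp (Complex.I * (θ : ℂ))) ^ ((1 : ℂ) / 3) *
            Complex.exp
              (-3 * (4 : ℂ) ^ (-(4 : ℂ) / 3) * Complex.exp (2 * (π : ℂ) * Complex.I / 3) *
                  ((r : ℂ) * Complex.exp (Complex.I * (θ : ℂ))) ^ ((4 : ℂ) / 3)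
                + (4 : ℂ) ^ (-(2 : ℂ) / 3) * x *
                  ((r : ℂ) * Complex.exp (Complex.I * (θ : ℂ))) ^ ((2 : ℂ) / 3) *
                  Complex.exp ((π : ℂ) * Complex.I / 3)
                - x ^ 2 / 6)
          - ∑ n ∈ Finset.range (N + 1),
              Complex.exp (-(2 * (n : ℂ) + 1) * (π : ℂ) * Complex.I / 6) * A x n *
                ((r : ℂ) * Complex.exp (Complex.I * (θ : ℂ))) ^ (-(2 * (n : ℂ)) / 3))
      =O[atTop] fun r : ℝ => r ^ (-(2 * ((N : ℝ) + 1)) / 3) := by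
  have hpi := Real.pi_pos
  set α : ℝ := (θ + π / 2) / 3 with hα
  have hα0 : 0 ≤ α := by rw [hα]; linarith [hθ.1]
  have hα1 : α < π / 8 := by rw [hα]; linarith [hθ.2]
  have hz1 : ‖rot α ^ 2‖ = 1 := by rw [norm_pow, norm_rot, one_pow]
  have hz2 : 0 < ((rot α ^ 2) ^ 2).re := by
    rw [← pow_mul, rot_pow_re]
    apply Real.cos_pos_of_mem_Ioo
    constructor <;> push_cast <;> linarith
  have hz3 : 0 < (rot α ^ 2).re := by
    rw [rot_pow_re]
    apply Real.cos_pos_of_mem_Ioo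
    constructor <;> push_cast <;> linarith
  obtain ⟨C, hC⟩ := laplace x hz1 hz2 hz3 N
  have hδ : Tendsto (fun r : ℝ => 1 / ((r / 4) ^ ((1 : ℝ) / 3)) ^ 2) atTop (nhds 0) := by
    have t1 : Tendsto (fun r : ℝ => (r / 4) ^ ((1 : ℝ) / 3)) atTop atTop :=
      (tendsto_rpow_atTop (by norm_num)).comp (tendsto_id.atTop_div_const (by norm_num))
    have t2 := ((tendsto_pow_atTop (α := ℝ) two_ne_zero).comp t1).inv_tendsto_atTop
    refine t2.congr fun r => ?_
    simp
  have hδx : Tendsto (fun r : ℝ => ‖x‖ * (1 / ((r / 4) ^ ((1 : ℝ) / 3)) ^ 2)) atTop (nhds 0) := by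
    simpa using hδ.const_mul ‖x‖
  set M : ℂ := Complex.exp (π * Complex.I / 6) ^ (-1 : ℤ) *
      ((Real.sqrt (π / 6) : ℂ) * Complex.exp (x ^ 2 / 6))⁻¹ with hM
  refine IsBigO.of_bound (‖M‖ * (C * (4 : ℝ) ^ ((2 * ((N : ℝ) + 1)) / 3))) ?_
  filter_upwards [eventually_gt_atTop 0, hδ.eventually (ge_mem_nhds one_pos),
    hδx.eventually (ge_mem_nhds hz2)] with r hr h1 h2
  rw [key_eq x θ hθ N r hr α _ hα rfl, norm_mul, mul_assoc ‖M‖]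
  have hb := hC _ (by positivity) h1 h2
  have hpow : (1 / ((r / 4) ^ ((1 : ℝ) / 3)) ^ 2) ^ (N + 1) =
      (4 : ℝ) ^ ((2 * ((N : ℝ) + 1)) / 3) * r ^ (-(2 * ((N : ℝ) + 1)) / 3) := by
    rw [one_div, inv_pow, ← pow_mul, ← Real.rpow_natCast, ← Real.rpow_mul (by positivity),
      ← Real.rpow_neg (by positivity), Real.div_rpow hr.le (by norm_num), div_eq_mul_inv,
      ← Real.rpow_neg (by norm_num), mul_comm]
    congr 2
    · push_cast; ring
    · push_cast; ring
  rw [hpow] at hb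
  rw [Real.norm_of_nonneg (Real.rpow_nonneg hr.le _)]
  refine mul_le_mul_of_nonneg_left (hb.trans_eq ?_) (norm_nonneg _)
  ring
end
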